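/- Let (U,ρ) be a complete metric space, let g ∈ W(ℝ,U), and let F ∈ W(ℝ, cl U). Then for any increasing function η : [0,+∞) → [0,+∞) with η(0) = 0 and η(t) > 0 for every t > 0, there exists a function f ∈ W(ℝ,U) such that Mod f ⊆ Mod g + Mod F, f(t) ∈ F(t) for a.e. t ∈ ℝ, and ρ(f(t), g(t)) ≤ ρ(g(t), F(t)) + η(ρ(g(t), F(t))) for a.e. t ∈ ℝ (where ρ(x,A) = inf_{y∈A} ρ(x,y)). -/

import Mathlib

open MeasureTheory Filter Topology TopologicalSpace
open scoped ENNReal Pointwise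

noncomputable section

/-- The truncated ("bounded") distance `ρ'(x,y) = min {1, ρ(x,y)}` on a metric space. -/
def bdist {α : Type*} [PseudoMetricSpace α] : α → α → ℝ := fun x y => min 1 (dist x y)

/-- The Hausdorff distance `dist_{ρ'}` (corresponding to the truncated metric `ρ'`)
between non-empty closed subsets of a metric space. -/
def clDist {α : Type*} [MetricSpace α] : Closeds α → Closeds α → ℝ :=
  fun A B => (min 1 (EMetric.hausdorffEdist (A : Set α) (B : Set α))).toReal

/-- The Hausdorff distance `dist_ρ` between (non-empty closed bounded) subsets. -/
def clbDist {α : Type*} [MetricSpace α] : Closeds α → Closeds α → ℝ :=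
  fun A B => Metric.hausdorffDist (A : Set α) (B : Set α)

/-- `D^{(d)}_{p,l}(f,g) = ( sup_ξ (1/l) ∫_ξ^{ξ+l} d(f t, g t)^p dt )^{1/p}`,
valued in `ℝ≥0∞`. -/
def weylD {α : Type*} (d : α → α → ℝ) (p l : ℝ) (f g : ℝ → α) : ℝ≥0∞ :=
  (⨆ ξ : ℝ, ENNReal.ofReal (1 / l) *
      ∫⁻ t in Set.Icc ξ (ξ + l), ENNReal.ofReal (d (f t) (g t) ^ p)) ^ (1 / p)

/-- The Weyl semimetric `D^{(d)}_p(f,g) = lim_{l → +∞} D^{(d)}_{p,l}(f,g)`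
(the limit exists; it is formalized here as a `limsup`). -/
def weylDinf {α : Type*} (d : α → α → ℝ) (p : ℝ) (f g : ℝ → α) : ℝ≥0∞ :=
  Filter.limsup (fun l => weylD d p l f g) Filter.atTop

/-- Membership in `M_p(ℝ, α)`: `f` is (strongly) measurable and
`sup_ξ ∫_ξ^{ξ+1} d(f t, x₀)^p dt < +∞`. -/
def MemMp {α : Type*} [TopologicalSpace α] (d : α → α → ℝ) (p : ℝ) (x₀ : α)
    (f : ℝ → α) : Prop :=
  AEStronglyMeasurable f MeasureTheory.volume ∧
  ∃ C : ℝ, ∀ ξ : ℝ,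
    (∫⁻ t in Set.Icc ξ (ξ + 1), ENNReal.ofReal (d (f t) x₀ ^ p)) ≤ ENNReal.ofReal C

/-- A set `T ⊆ ℝ` is relatively dense. -/
def RelDense (T : Set ℝ) : Prop := ∃ a > 0, ∀ ξ : ℝ, (Set.Icc ξ (ξ + a) ∩ T).Nonempty

/-- The set of `(ε, D^{(d)}_{p,l})`-almost periods of `f`. -/
def APeriodsL {α : Type*} (d : α → α → ℝ) (p l ε : ℝ) (f : ℝ → α) : Set ℝ :=
  {τ | weylD d p l f (fun t => f (t + τ)) < ENNReal.ofReal ε}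

/-- The set `P^{(d)}_p(ε; f)` of `(ε, D^{(d)}_p)`-almost periods of `f`. -/
def APeriods {α : Type*} (d : α → α → ℝ) (p ε : ℝ) (f : ℝ → α) : Set ℝ :=
  {τ | weylDinf d p f (fun t => f (t + τ)) < ENNReal.ofReal ε}

/-- Membership in the space `W_p(ℝ, α)` of Weyl almost periodic functions of order `p`
w.r.t. the distance `d` (with distinguished point `x₀`). -/
def MemWp {α : Type*} [TopologicalSpace α] (d : α → α → ℝ) (p : ℝ) (x₀ : α)
    (f : ℝ → α) : Prop :=
  MemMp d p x₀ f ∧ ∀ ε > 0, ∃ l > 0, RelDense (APeriodsL d p l ε f)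

/-- The module `Mod f`: the additive group of all `λ ∈ ℝ` such that `e^{iλτ_j} → 1`
for every `f`-returning sequence `{τ_j}` (a sequence with `D^{(d)}_1(f, f(·+τ_j)) → 0`,
where `d` is the relevant bounded distance). -/
def WMod {α : Type*} (d : α → α → ℝ) (f : ℝ → α) : Set ℝ :=
  {lam : ℝ | ∀ τ : ℕ → ℝ,
    Tendsto (fun j => weylDinf d 1 f (fun t => f (t + τ j))) atTop (nhds 0) →
    Tendsto (fun j => Complex.exp (Complex.I * ((lam * τ j : ℝ) : ℂ))) atTop (nhds 1)}

/-- `κ_W(T) = lim_{l → +∞} sup_ξ (1/l) meas([ξ, ξ+l] ∩ T)` (formalized as a `limsup`). -/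
def kappaW (T : Set ℝ) : ℝ≥0∞ :=
  Filter.limsup (fun l : ℝ => ⨆ ξ : ℝ,
    ENNReal.ofReal (1 / l) * MeasureTheory.volume (Set.Icc ξ (ξ + l) ∩ T)) Filter.atTop

/-- Membership in `M*_p(ℝ, α)`. -/
def MemMpStar {α : Type*} [TopologicalSpace α] (d : α → α → ℝ) (p : ℝ) (x₀ : α)
    (f : ℝ → α) : Prop :=
  MemMp d p x₀ f ∧
  ∀ ε > 0, ∃ δ > 0, ∀ T : Set ℝ, MeasurableSet T → kappaW T < ENNReal.ofReal δ →
    Filter.limsup (fun l : ℝ => ⨆ ξ : ℝ, ENNReal.ofReal (1 / l) *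
        ∫⁻ t in Set.Icc ξ (ξ + l) ∩ T, ENNReal.ofReal (d (f t) x₀ ^ p)) Filter.atTop
      < ENNReal.ofReal ε

/-- Distance from a point to a set w.r.t. the distance `d`, valued in `ℝ≥0∞`
(`∞` for the empty set). -/
def dInfDist {α : Type*} (d : α → α → ℝ) (x : α) (K : Set α) : ℝ≥0∞ :=
  ⨅ y ∈ K, ENNReal.ofReal (d x y)

/-- Membership in `W̃_p(ℝ, α)`: conditions 1) (relatively dense sets of
`(ε, D^{(d)}_p)`-almost periods) and 2) (approximate compactness of values). -/
def MemWpTilde {α : Type*} [TopologicalSpace α] (d : α → α → ℝ) (p : ℝ) (x₀ : α)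
    (f : ℝ → α) : Prop :=
  MemMp d p x₀ f ∧
  (∀ ε > 0, RelDense (APeriods d p ε f)) ∧
  (∀ ε > 0, ∀ δ > 0, ∃ K : Set α, IsCompact K ∧
      kappaW {t | ENNReal.ofReal ε ≤ dInfDist d (f t) K} < ENNReal.ofReal δ)

/-- The support of a Borel measure on a topological space. -/
def measSupport {α : Type*} [TopologicalSpace α] [MeasurableSpace α]
    (μ : Measure α) : Set α :=
  {x | ∀ V : Set α, IsOpen V → x ∈ V → 0 < μ V}

/-- `r_δ(x, μ) = inf { r > 0 : μ[U_r(x)] > δ }`. -/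
def rdelta {α : Type*} [PseudoMetricSpace α] [MeasurableSpace α]
    (x : α) (μ : Measure α) (δ : ℝ) : ℝ :=
  sInf {r : ℝ | 0 < r ∧ ENNReal.ofReal δ < μ (Metric.ball x r)}

/-- The Lévy–Prokhorov distance on Borel probability measures. -/
def lpDist {α : Type*} [MeasurableSpace α] [PseudoEMetricSpace α] :
    ProbabilityMeasure α → ProbabilityMeasure α → ℝ :=
  fun μ ν => MeasureTheory.levyProkhorovDist (μ : Measure α) (ν : Measure α)

end

/-!
A function `f` that is almost preserved, in the mean, by every translation that almost preserves
`z = (g, F)` is Weyl almost periodic along with `z`, and `Mod f ⊆ Mod z`; almost preservation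
is measured by the truncated distance between `f` and its translate, the translation cost. Such
functions are closed under products, uniform limits and pasting along sets of the form
`{t | r ≤ φ (z t)}`, where `φ` is Lipschitz and `r` is outside a countable set of values at which
`φ ∘ z` concentrates. Since `z` is approximated by countably-valued functions of this kind, `f` can
be built by successively correcting approximate selections of `F`, with an accuracy that depends on
the size of the gap `ρ(g, F)`.

There remains `Mod z ⊆ Mod g + Mod F`. The Weyl seminorms `N₁`, `N₂` of `g` and `F` make
`G = (ℝ, N₁ + N₂)` totally bounded, and a frequency of `z` is a character `e` continuous on `G`. Let
`a` and `b` be tent functions for `N₁` and `N₂`, the second multiplied by `e`. Their convolution on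
the compact completion of `G` is nonzero, hence so is the corresponding operator on `L²`, and
together with the translations it generates a commutative C*-algebra. A character of that algebra
not vanishing at the operator restricts to a character `ψ` of `G` with `|ψ - 1| ≲ N₁`, because `a`
is almost invariant, and `|ψ - e| ≲ N₂`, because `b` almost transforms by `e`; thus `e` is the
product of `ψ` and `e / ψ`.
-/

noncomputable section

section SupMean

variable {l L : ℝ} {φ ψ : ℝ → ℝ≥0∞}

/-- The supremum of the averages of `φ` over the windows `[ξ, ξ + l]`. -/
def supMean (l : ℝ) (φ : ℝ → ℝ≥0∞) : ℝ≥0∞ :=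
  ⨆ ξ : ℝ, ENNReal.ofReal (1 / l) * ∫⁻ t in Set.Icc ξ (ξ + l), φ t

theorem ofReal_one_div_mul_ofReal (hl : 0 < l) : ENNReal.ofReal (1 / l) * ENNReal.ofReal l = 1 := by
  rw [← ENNReal.ofReal_mul (by positivity), one_div_mul_cancel hl.ne', ENNReal.ofReal_one]

theorem mean_le_supMean (l : ℝ) (φ : ℝ → ℝ≥0∞) (ξ : ℝ) :
    ENNReal.ofReal (1 / l) * ∫⁻ t in Set.Icc ξ (ξ + l), φ t ≤ supMean l φ :=
  le_iSup (fun ξ : ℝ ↦ ENNReal.ofReal (1 / l) * ∫⁻ t in Set.Icc ξ (ξ + l), φ t) ξ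

theorem supMean_mono_ae (h : φ ≤ᵐ[volume] ψ) : supMean l φ ≤ supMean l ψ :=
  iSup_mono fun _ ↦ mul_le_mul_right (lintegral_mono_ae (ae_restrict_of_ae h)) _

theorem supMean_mono (h : φ ≤ ψ) : supMean l φ ≤ supMean l ψ :=
  supMean_mono_ae (ae_of_all _ h)

theorem supMean_add_le (hφ : AEMeasurable φ) : supMean l (φ + ψ) ≤ supMean l φ + supMean l ψ := by
  refine iSup_le fun ξ ↦ ?_
  simp only [Pi.add_apply]
  rw [lintegral_add_left' hφ.restrict, mul_add]
  exact add_le_add (mean_le_supMean _ _ _) (mean_le_supMean _ _ _)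

theorem supMean_const_mul {c : ℝ≥0∞} (hc : c ≠ ∞) :
    supMean l (fun t ↦ c * φ t) = c * supMean l φ := by
  simp only [supMean, lintegral_const_mul' _ _ hc, ENNReal.mul_iSup, mul_left_comm]

theorem supMean_const (hl : 0 < l) (c : ℝ≥0∞) : supMean l (fun _ ↦ c) = c := by
  simp only [supMean, setLIntegral_const, Real.volume_Icc, add_sub_cancel_left, mul_left_comm _ c,
    ofReal_one_div_mul_ofReal hl, mul_one, ciSup_const]

theorem setLIntegral_Icc_comp_add_right (φ : ℝ → ℝ≥0∞) (τ a b : ℝ) :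
    ∫⁻ t in Set.Icc a b, φ (t + τ) = ∫⁻ t in Set.Icc (a + τ) (b + τ), φ t := by
  rw [← (measurePreserving_add_right (volume : Measure ℝ) τ).setLIntegral_comp_preimage_emb
    (measurableEmbedding_addRight τ) φ (Set.Icc (a + τ) (b + τ)), Set.preimage_add_const_Icc,
    add_sub_cancel_right, add_sub_cancel_right]

theorem supMean_comp_add_right (l : ℝ) (φ : ℝ → ℝ≥0∞) (τ : ℝ) :
    supMean l (fun t ↦ φ (t + τ)) = supMean l φ := by
  simp only [supMean, setLIntegral_Icc_comp_add_right, add_right_comm _ l τ]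
  exact (Equiv.addRight τ).iSup_congr fun _ ↦ rfl

theorem setLIntegral_Icc_le_mul_supMean (hl : 0 < l) (ξ : ℝ) :
    ∫⁻ t in Set.Icc ξ (ξ + l), φ t ≤ ENNReal.ofReal l * supMean l φ :=
  calc ∫⁻ t in Set.Icc ξ (ξ + l), φ t
      = ENNReal.ofReal l * (ENNReal.ofReal (1 / l) * ∫⁻ t in Set.Icc ξ (ξ + l), φ t) := by
        rw [← mul_assoc, mul_comm (ENNReal.ofReal l), ofReal_one_div_mul_ofReal hl, one_mul]
    _ ≤ ENNReal.ofReal l * supMean l φ := by gcongr; exact mean_le_supMean _ _ _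

theorem setLIntegral_Icc_le_nat_mul_supMean (hl : 0 < l) (ξ : ℝ) (n : ℕ) :
    ∫⁻ t in Set.Icc ξ (ξ + n * l), φ t ≤ n * (ENNReal.ofReal l * supMean l φ) := by
  induction n with
  | zero => simp
  | succ n ih =>
    simp only [Nat.cast_succ, add_one_mul, ← add_assoc]
    exact (lintegral_mono_set (Set.Icc_subset_Icc_union_Icc (b := ξ + n * l))).trans <|
      (lintegral_union_le _ _ _).trans <| add_le_add ih (setLIntegral_Icc_le_mul_supMean hl _)

theorem supMean_le_two_mul (hl : 0 < l) (hL : l ≤ L) (φ : ℝ → ℝ≥0∞) :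
    supMean L φ ≤ 2 * supMean l φ := by
  have hL0 : 0 < L := hl.trans_le hL
  set n := ⌈L / l⌉₊
  have hn : n * l ≤ 2 * L := by
    have h := Nat.ceil_lt_add_one (show 0 ≤ L / l by positivity)
    rw [div_add_one hl.ne', lt_div_iff₀ hl] at h
    linarith
  refine iSup_le fun ξ ↦ ?_
  calc ENNReal.ofReal (1 / L) * ∫⁻ t in Set.Icc ξ (ξ + L), φ t
      ≤ ENNReal.ofReal (1 / L) * ∫⁻ t in Set.Icc ξ (ξ + n * l), φ t := by
        gcongr
        exact (div_le_iff₀ hl).1 (Nat.le_ceil _)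
    _ ≤ ENNReal.ofReal (1 / L) * (n * (ENNReal.ofReal l * supMean l φ)) := by
        gcongr
        exact setLIntegral_Icc_le_nat_mul_supMean hl ξ n
    _ = ENNReal.ofReal (1 / L) * ENNReal.ofReal (n * l) * supMean l φ := by
        rw [ENNReal.ofReal_mul (by positivity), ENNReal.ofReal_natCast]
        ring
    _ ≤ ENNReal.ofReal (1 / L) * ENNReal.ofReal (2 * L) * supMean l φ := by gcongr
    _ = 2 * supMean l φ := by
        rw [ENNReal.ofReal_mul zero_le_two, mul_left_comm, ofReal_one_div_mul_ofReal hL0, mul_one,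
          ENNReal.ofReal_ofNat]

theorem eventually_supMean_le_two_mul (hl : 0 < l) (φ : ℝ → ℝ≥0∞) :
    ∀ᶠ L in atTop, supMean L φ ≤ 2 * supMean l φ :=
  (eventually_ge_atTop l).mono fun _ hL ↦ supMean_le_two_mul hl hL φ

end SupMean

section TransCost

variable {α β : Type*} [PseudoEMetricSpace α] [PseudoEMetricSpace β]

/-- The distance truncated at `1`, through which `bdist` and `clDist` are both expressed. -/
def truncEDist (x y : α) : ℝ≥0∞ := min 1 (edist x y)

theorem truncEDist_le_one (x y : α) : truncEDist x y ≤ 1 := min_le_left _ _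

theorem truncEDist_le_edist (x y : α) : truncEDist x y ≤ edist x y := min_le_right _ _

theorem truncEDist_ne_top (x y : α) : truncEDist x y ≠ ∞ :=
  ne_top_of_le_ne_top ENNReal.one_ne_top (truncEDist_le_one x y)

theorem truncEDist_self (x : α) : truncEDist x x = 0 := by simp [truncEDist]

theorem truncEDist_comm (x y : α) : truncEDist x y = truncEDist y x := by
  simp only [truncEDist, edist_comm]

theorem truncEDist_triangle (x y z : α) : truncEDist x z ≤ truncEDist x y + truncEDist y z := by
  simp only [truncEDist, ← min_add_add_left, ← min_add_add_right]
  exact le_min (le_min ((min_le_left _ _).trans le_self_add) ((min_le_left _ _).trans le_add_self))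
    (le_min ((min_le_left _ _).trans le_self_add) ((min_le_right _ _).trans (edist_triangle _ _ _)))

theorem truncEDist_triangle4 (x y z w : α) :
    truncEDist x w ≤ truncEDist x y + truncEDist y z + truncEDist z w :=
  (truncEDist_triangle x z w).trans (by gcongr; exact truncEDist_triangle x y z)

theorem edist_eq_truncEDist_of_lt_one {x y : α} (h : truncEDist x y < 1) :
    edist x y = truncEDist x y :=
  (min_eq_right ((min_lt_iff.1 h).resolve_left (lt_irrefl _)).le).symm

theorem truncEDist_fst_le (p q : α × β) : truncEDist p.1 q.1 ≤ truncEDist p q :=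
  min_le_min_left _ (le_max_left _ _)

theorem truncEDist_snd_le (p q : α × β) : truncEDist p.2 q.2 ≤ truncEDist p q :=
  min_le_min_left _ (le_max_right _ _)

theorem truncEDist_prod_le (p q : α × β) :
    truncEDist p q ≤ truncEDist p.1 q.1 + truncEDist p.2 q.2 := by
  rw [truncEDist, Prod.edist_eq, min_max_distrib_left]
  exact max_le_add_of_nonneg zero_le zero_le

theorem continuous_truncEDist : Continuous fun p : α × α ↦ truncEDist p.1 p.2 :=
  continuous_const.min (continuous_fst.edist continuous_snd)

/-- The cost of translating `w` by `τ`, as a function of time. -/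
def transCost (w : ℝ → α) (τ t : ℝ) : ℝ≥0∞ := truncEDist (w t) (w (t + τ))

theorem ae_comp_add_right {P : ℝ → Prop} (h : ∀ᵐ t, P t) (τ : ℝ) : ∀ᵐ t, P (t + τ) :=
  (quasiMeasurePreserving_add_right volume τ).ae h

variable {w : ℝ → α}

theorem transCost_le_one (w : ℝ → α) (τ t : ℝ) : transCost w τ t ≤ 1 := truncEDist_le_one _ _

theorem transCost_congr_ae {v : ℝ → α} (h : v =ᵐ[volume] w) (τ : ℝ) :
    transCost v τ =ᵐ[volume] transCost w τ := by
  filter_upwards [h, ae_comp_add_right h τ] with t h₁ h₂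
  rw [transCost, transCost, h₁, h₂]

theorem aestronglyMeasurable_comp_add_right (hw : AEStronglyMeasurable w) (τ : ℝ) :
    AEStronglyMeasurable fun t ↦ w (t + τ) :=
  hw.comp_quasiMeasurePreserving (quasiMeasurePreserving_add_right volume τ)

theorem aemeasurable_truncEDist {v : ℝ → α} (hv : AEStronglyMeasurable v)
    (hw : AEStronglyMeasurable w) : AEMeasurable fun t ↦ truncEDist (v t) (w t) :=
  (continuous_truncEDist.comp_aestronglyMeasurable (hv.prodMk hw)).aemeasurable

theorem aemeasurable_transCost (hw : AEStronglyMeasurable w) (τ : ℝ) :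
    AEMeasurable (transCost w τ) :=
  aemeasurable_truncEDist hw (aestronglyMeasurable_comp_add_right hw τ)

theorem supMean_transCost_le_one {l : ℝ} (hl : 0 < l) (w : ℝ → α) (τ : ℝ) :
    supMean l (transCost w τ) ≤ 1 :=
  (supMean_mono (transCost_le_one w τ)).trans (supMean_const hl 1).le

theorem supMean_transCost_add_le (hw : AEStronglyMeasurable w) (l σ τ : ℝ) :
    supMean l (transCost w (σ + τ)) ≤ supMean l (transCost w σ) + supMean l (transCost w τ) := by
  rw [← supMean_comp_add_right l (transCost w τ) σ]
  refine (supMean_mono fun t ↦ ?_).trans (supMean_add_le (aemeasurable_transCost hw σ))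
  simp only [transCost, Pi.add_apply, ← add_assoc]
  exact truncEDist_triangle _ _ _

theorem supMean_transCost_neg (w : ℝ → α) (l τ : ℝ) :
    supMean l (transCost w (-τ)) = supMean l (transCost w τ) := by
  rw [← supMean_comp_add_right l (transCost w (-τ)) τ]
  exact congrArg _ (funext fun t ↦ by simp only [transCost, add_neg_cancel_right, truncEDist_comm])

theorem supMean_transCost_zero (w : ℝ → α) (l : ℝ) : supMean l (transCost w 0) = 0 := by
  simp [supMean, transCost, truncEDist_self]

theorem supMean_transCost_sub_le (hw : AEStronglyMeasurable w) (l σ τ : ℝ) :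
    supMean l (transCost w (σ - τ)) ≤ supMean l (transCost w σ) + supMean l (transCost w τ) := by
  rw [sub_eq_add_neg, ← supMean_transCost_neg w l τ]
  exact supMean_transCost_add_le hw l σ (-τ)

end TransCost

section Continuity

variable {α : Type*} [PseudoEMetricSpace α] {w : ℝ → α}

/-- The Kuratowski embedding, applied to the truncated distance. -/
theorem exists_edist_eq_truncEDist.{u} (α : Type u) [PseudoEMetricSpace α] :
    ∃ (E : Type u) (_ : NormedAddCommGroup E) (k : α → E),
      ∀ x y, edist (k x) (k y) = truncEDist x y := by
  have htop (x y : α) : truncEDist x y ≠ ∞ := ne_top_of_le_ne_top ENNReal.one_ne_top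
    (truncEDist_le_one x y)
  have hcont (x : α) : Continuous fun z ↦ (truncEDist x z).toReal :=
    ENNReal.continuousOn_toReal.comp_continuous
      (continuous_truncEDist.comp (continuous_const.prodMk continuous_id)) (htop x)
  have hbound (x z : α) : ‖(truncEDist x z).toReal‖ ≤ 1 := by
    rw [Real.norm_of_nonneg ENNReal.toReal_nonneg]
    exact ENNReal.toReal_mono ENNReal.one_ne_top (truncEDist_le_one x z)
  refine ⟨BoundedContinuousFunction α ℝ, inferInstance,
    fun x ↦ .ofNormedAddCommGroup _ (hcont x) 1 (hbound x), fun x y ↦ ?_⟩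
  rw [edist_dist, ← ENNReal.ofReal_toReal (htop x y)]
  congr 1
  have htri (x y z : α) : (truncEDist x z).toReal ≤ (truncEDist x y).toReal +
      (truncEDist y z).toReal := by
    rw [← ENNReal.toReal_add (htop x y) (htop y z)]
    exact ENNReal.toReal_mono (ENNReal.add_ne_top.2 ⟨htop x y, htop y z⟩)
      (truncEDist_triangle x y z)
  refine le_antisymm ((BoundedContinuousFunction.dist_le ENNReal.toReal_nonneg).2 fun z ↦ ?_) ?_
  · refine abs_sub_le_iff.2 ⟨sub_le_iff_le_add.2 (htri x y z), sub_le_iff_le_add.2 ?_⟩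
    rw [truncEDist_comm x y]
    exact htri y x z
  · refine le_trans ?_ (BoundedContinuousFunction.dist_coe_le_dist y)
    simp [truncEDist_self]

theorem tendsto_lintegral_enorm_comp_add_right_sub {E : Type*} [NormedAddCommGroup E]
    {h : ℝ → E} (hh : MemLp h 1) :
    Tendsto (fun s ↦ ∫⁻ t, ‖h t - h (t + s)‖ₑ) (𝓝 0) (𝓝 0) := by
  have hcont : Tendsto (fun s : ℝ ↦ DomAddAct.mk s +ᵥ hh.toLp h) (𝓝 0) (𝓝 (hh.toLp h)) := by
    have : Fact ((1 : ℝ≥0∞) ≠ ∞) := ⟨ENNReal.one_ne_top⟩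
    have : Continuous fun s : ℝ ↦ DomAddAct.mk s +ᵥ hh.toLp h :=
      (DomAddAct.mkHomeomorph.continuous).vadd continuous_const
    simpa using this.tendsto 0
  refine (tendsto_iff_edist_tendsto_0.1 hcont).congr fun s ↦ ?_
  rw [edist_comm, DomAddAct.mk_vadd_toLp, Lp.edist_toLp_toLp, eLpNorm_one_eq_lintegral_enorm]
  simp [add_comm]

theorem tendsto_setLIntegral_transCost (hw : AEStronglyMeasurable w) (a b : ℝ) :
    Tendsto (fun s ↦ ∫⁻ t in Set.Icc a b, transCost w s t) (𝓝 0) (𝓝 0) := by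
  obtain ⟨E, _, k, hk⟩ := exists_edist_eq_truncEDist α
  have hkc : Continuous k := (LipschitzWith.of_edist_le fun x y ↦ (hk x y).trans_le
    (truncEDist_le_edist x y)).continuous
  set I := Set.Icc (a - 1) (b + 1)
  set h : ℝ → E := I.indicator fun t ↦ k (w t) - k (w 0)
  have hbound (t : ℝ) : ‖k (w t) - k (w 0)‖ ≤ 1 := by
    rw [← ENNReal.ofReal_le_ofReal_iff zero_le_one, ofReal_norm, ← edist_eq_enorm_sub, hk,
      ENNReal.ofReal_one]
    exact truncEDist_le_one _ _
  have hmeas : AEStronglyMeasurable fun t ↦ k (w t) - k (w 0) :=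
    (hkc.comp_aestronglyMeasurable hw).sub aestronglyMeasurable_const
  have hh : MemLp h 1 := by
    have : IsFiniteMeasure (volume.restrict I) := isFiniteMeasure_restrict.2 measure_Icc_lt_top.ne
    exact (memLp_indicator_iff_restrict measurableSet_Icc).2
      (.of_bound hmeas.restrict 1 (ae_of_all _ hbound))
  refine tendsto_of_tendsto_of_tendsto_of_le_of_le' tendsto_const_nhds
    (tendsto_lintegral_enorm_comp_add_right_sub hh) (.of_forall fun _ ↦ zero_le) ?_
  filter_upwards [Metric.closedBall_mem_nhds (0 : ℝ) one_pos] with s hs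
  rw [mem_closedBall_zero_iff, Real.norm_eq_abs, abs_le] at hs
  refine (setLIntegral_mono' measurableSet_Icc fun t ht ↦ ?_).trans (setLIntegral_le_lintegral _ _)
  have hmem : t ∈ I := ⟨by linarith [ht.1], by linarith [ht.2]⟩
  have hmem' : t + s ∈ I := ⟨by linarith [ht.1], by linarith [ht.2]⟩
  simp only [h, Set.indicator_of_mem hmem, Set.indicator_of_mem hmem', sub_sub_sub_cancel_right,
    ← edist_eq_enorm_sub, hk]
  exact le_rfl

end Continuity

section Syndetic

/-- A set is syndetic if finitely many of its translates cover the group. -/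
def IsSyndetic {G : Type*} [AddCommGroup G] (P : Set G) : Prop :=
  ∃ s : Set G, s.Finite ∧ s + P = Set.univ

theorem IsSyndetic.mono {G : Type*} [AddCommGroup G] {P Q : Set G} (hP : IsSyndetic P)
    (h : P ⊆ Q) : IsSyndetic Q :=
  let ⟨s, hs, hsP⟩ := hP
  ⟨s, hs, Set.univ_subset_iff.1 (hsP ▸ Set.add_subset_add_left h)⟩

theorem IsSyndetic.sub_inter_sub {G : Type*} [AddCommGroup G] {P Q : Set G} (hP : IsSyndetic P)
    (hQ : IsSyndetic Q) : IsSyndetic ((P - P) ∩ (Q - Q)) := by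
  obtain ⟨s, hs, hsP⟩ := hP
  obtain ⟨t, ht, htQ⟩ := hQ
  have hchoose (i : G × G) : ∃ c, ∀ x ∈ (i.1 +ᵥ P) ∩ (i.2 +ᵥ Q), c ∈ (i.1 +ᵥ P) ∩ (i.2 +ᵥ Q) := by
    rcases ((i.1 +ᵥ P) ∩ (i.2 +ᵥ Q)).eq_empty_or_nonempty with h | ⟨c, hc⟩
    · exact ⟨0, fun x hx ↦ by simp [h] at hx⟩
    · exact ⟨c, fun _ _ ↦ hc⟩
  choose c hc using hchoose
  refine ⟨c '' s ×ˢ t, (hs.prod ht).image c, Set.eq_univ_of_forall fun x ↦ ?_⟩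
  obtain ⟨a, ha, p, hp, hap⟩ : x ∈ s + P := hsP ▸ Set.mem_univ x
  obtain ⟨b, hb, q, hq, hbq⟩ : x ∈ t + Q := htQ ▸ Set.mem_univ x
  obtain ⟨⟨p', hp', hcp⟩, q', hq', hcq⟩ := hc (a, b) x ⟨⟨p, hp, hap⟩, ⟨q, hq, hbq⟩⟩
  refine ⟨c (a, b), ⟨(a, b), ⟨ha, hb⟩, rfl⟩, x - c (a, b),
    ⟨⟨p, hp, p', hp', ?_⟩, q, hq, q', hq', ?_⟩, add_sub_cancel _ _⟩
  · rw [← hcp, ← hap]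
    exact (add_sub_add_left_eq_sub _ _ _).symm
  · rw [← hcq, ← hbq]
    exact (add_sub_add_left_eq_sub _ _ _).symm

theorem IsSyndetic.relDense {P : Set ℝ} (hP : IsSyndetic P) : RelDense P := by
  obtain ⟨s, hs, hsP⟩ := hP
  obtain ⟨M, hM0, hM⟩ := hs.isBounded.exists_pos_norm_le
  refine ⟨2 * M, by positivity, fun ξ ↦ ?_⟩
  obtain ⟨x, hx, p, hp, hxp⟩ : ξ + M ∈ s + P := hsP ▸ Set.mem_univ _
  have hxM := abs_le.1 (hM x hx)
  simp only at hxp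
  exact ⟨p, ⟨by linarith, by linarith⟩, hp⟩

theorem RelDense.mono {S T : Set ℝ} (hS : RelDense S) (h : S ⊆ T) : RelDense T :=
  let ⟨a, ha, hSa⟩ := hS
  ⟨a, ha, fun ξ ↦ (hSa ξ).mono (Set.inter_subset_inter_right _ h)⟩

theorem RelDense.isSyndetic_add_Icc {T : Set ℝ} (hT : RelDense T) {r : ℝ} (hr : 0 < r) :
    IsSyndetic (T + Set.Icc 0 r) := by
  obtain ⟨a, -, hTa⟩ := hT
  refine ⟨(fun n : ℕ ↦ n * r) '' Set.Iic ⌊a / r⌋₊, (Set.finite_Iic _).image _,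
    Set.eq_univ_of_forall fun x ↦ ?_⟩
  obtain ⟨τ, ⟨hτ₁, hτ₂⟩, hτ⟩ := hTa (x - a)
  have hx : 0 ≤ x - τ := by linarith
  set n := ⌊(x - τ) / r⌋₊
  have hn₁ : n * r ≤ x - τ := (le_div_iff₀ hr).1 (Nat.floor_le (by positivity))
  have hn₂ : x - τ < (n + 1) * r := (div_lt_iff₀ hr).1 (Nat.lt_floor_add_one _)
  refine ⟨n * r, ⟨n, Nat.floor_le_floor (by gcongr; linarith), rfl⟩, x - n * r,
    ⟨τ, hτ, x - n * r - τ, ⟨by linarith, by linarith⟩, by simp⟩, by simp⟩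

end Syndetic

section IsWeylAP

variable {α β : Type*} [PseudoEMetricSpace α] [PseudoEMetricSpace β] {w : ℝ → α}

/-- Weyl almost periodicity, expressed through translation costs: the analogue of `MemWp bdist 1`
and `MemWp clDist 1` in a general space. -/
structure IsWeylAP (w : ℝ → α) : Prop where
  aestronglyMeasurable : AEStronglyMeasurable w
  relDense : ∀ ε > 0, ∃ l > 0, RelDense {τ | supMean l (transCost w τ) ≤ ε}

theorem IsWeylAP.exists_supMean_transCost_le (hw : IsWeylAP w) {ε : ℝ≥0∞} (hε : 0 < ε) :
    ∃ l > 0, ∃ r > 0, ∀ s, |s| ≤ r → supMean l (transCost w s) ≤ ε := by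
  obtain ⟨l, hl, hT⟩ := hw.relDense (ε / 3) (ENNReal.div_pos hε.ne' (by simp))
  obtain ⟨a, -, hTa⟩ := hT
  have hδ : 0 < ENNReal.ofReal l * (ε / 3) :=
    ENNReal.mul_pos (ENNReal.ofReal_pos.2 hl).ne' (ENNReal.div_pos hε.ne' (by simp)).ne'
  obtain ⟨r, hr, hball⟩ := Metric.eventually_nhds_iff.1 <| ENNReal.tendsto_nhds_zero.1
    (tendsto_setLIntegral_transCost hw.aestronglyMeasurable 0 (a + l)) _ hδ
  refine ⟨l, hl, r / 2, half_pos hr, fun s hs ↦ iSup_le fun ξ ↦ ?_⟩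
  obtain ⟨τ, ⟨hτ₁, hτ₂⟩, hτ⟩ := hTa (-ξ)
  have hs_near : ∫⁻ t in Set.Icc (ξ + τ) (ξ + l + τ), transCost w s t ≤
      ENNReal.ofReal l * (ε / 3) :=
    (lintegral_mono_set (Set.Icc_subset_Icc (by linarith) (by linarith))).trans
      (hball (by rw [dist_zero_right, Real.norm_eq_abs]; linarith))
  have hcost (t : ℝ) :
      transCost w s t ≤ transCost w τ t + transCost w s (t + τ) + transCost w τ (t + s) := by
    simp only [transCost, add_right_comm t s τ]
    rw [truncEDist_comm (w (t + s))]
    exact truncEDist_triangle4 _ _ _ _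
  have hmeas := aemeasurable_transCost hw.aestronglyMeasurable τ
  have hmeas' : AEMeasurable fun t ↦ transCost w s (t + τ) :=
    (aemeasurable_transCost hw.aestronglyMeasurable s).comp_quasiMeasurePreserving
      (quasiMeasurePreserving_add_right volume τ)
  calc ENNReal.ofReal (1 / l) * ∫⁻ t in Set.Icc ξ (ξ + l), transCost w s t
      ≤ supMean l (transCost w τ) + ENNReal.ofReal (1 / l) * (ENNReal.ofReal l * (ε / 3)) +
        supMean l (transCost w τ) := by
        grw [lintegral_mono hcost,
          lintegral_add_left' (f := fun t ↦ transCost w τ t + transCost w s (t + τ))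
            (hmeas.add hmeas').restrict,
          lintegral_add_left' hmeas.restrict, setLIntegral_Icc_comp_add_right _ τ, hs_near, mul_add,
          mul_add, mean_le_supMean, mean_le_supMean l fun t ↦ transCost w τ (t + s),
          supMean_comp_add_right]
    _ ≤ ε / 3 + ε / 3 + ε / 3 := by
        rw [← mul_assoc, ofReal_one_div_mul_ofReal hl, one_mul]
        exact add_le_add (add_le_add hτ le_rfl) hτ
    _ = ε := ENNReal.add_thirds ε

theorem IsWeylAP.isSyndetic (hw : IsWeylAP w) {ε : ℝ≥0∞} (hε : 0 < ε) :
    ∃ l > 0, ∀ L ≥ l, IsSyndetic {τ | supMean L (transCost w τ) ≤ ε} := by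
  have hε' : 0 < ε / 2 / 2 := ENNReal.half_pos (ENNReal.half_pos hε.ne').ne'
  obtain ⟨l₁, hl₁, hT⟩ := hw.relDense _ hε'
  obtain ⟨l₂, hl₂, r, hr, hcont⟩ := hw.exists_supMean_transCost_le hε'
  refine ⟨max l₁ l₂, lt_max_of_lt_left hl₁, fun L hL ↦ (hT.isSyndetic_add_Icc hr).mono ?_⟩
  rintro _ ⟨τ, hτ, s, hs, rfl⟩
  calc supMean L (transCost w (τ + s))
      ≤ supMean L (transCost w τ) + supMean L (transCost w s) :=
        supMean_transCost_add_le hw.aestronglyMeasurable L τ s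
    _ ≤ 2 * (ε / 2 / 2) + 2 * (ε / 2 / 2) := by
        refine add_le_add ?_ ?_
        · exact (supMean_le_two_mul hl₁ ((le_max_left _ _).trans hL) _).trans (by gcongr; exact hτ)
        · exact (supMean_le_two_mul hl₂ ((le_max_right _ _).trans hL) _).trans
            (by gcongr; exact hcont s (abs_le.2 ⟨by linarith [hs.1], hs.2⟩))
    _ = ε := by simp only [two_mul, ENNReal.add_halves]

theorem IsWeylAP.prodMk {v : ℝ → β} (hv : IsWeylAP v) (hw : IsWeylAP w) :
    IsWeylAP fun t ↦ (v t, w t) := by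
  refine ⟨hv.aestronglyMeasurable.prodMk hw.aestronglyMeasurable, fun ε hε ↦ ?_⟩
  have hε' : 0 < ε / 2 / 2 := ENNReal.half_pos (ENNReal.half_pos hε.ne').ne'
  obtain ⟨l₁, hl₁, hv'⟩ := hv.isSyndetic hε'
  obtain ⟨l₂, -, hw'⟩ := hw.isSyndetic hε'
  set l := max l₁ l₂
  have hvw := (hv' l (le_max_left _ _)).sub_inter_sub (hw' l (le_max_right _ _))
  refine ⟨l, lt_max_of_lt_left hl₁, (hvw.mono ?_).relDense⟩
  rintro τ ⟨⟨σ₁, hσ₁, σ₂, hσ₂, hσ⟩, ρ₁, hρ₁, ρ₂, hρ₂, hρ⟩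
  calc supMean l (transCost (fun t ↦ (v t, w t)) τ)
      ≤ supMean l (transCost v τ + transCost w τ) :=
        supMean_mono fun t ↦ truncEDist_prod_le (v t, w t) _
    _ ≤ supMean l (transCost v (σ₁ - σ₂)) + supMean l (transCost w (ρ₁ - ρ₂)) := by
        simp only [hσ, hρ]
        exact supMean_add_le (aemeasurable_transCost hv.aestronglyMeasurable _)
    _ ≤ (ε / 2 / 2 + ε / 2 / 2) + (ε / 2 / 2 + ε / 2 / 2) := by
        refine add_le_add ?_ ?_
        · exact (supMean_transCost_sub_le hv.aestronglyMeasurable _ _ _).trans (add_le_add hσ₁ hσ₂)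
        · exact (supMean_transCost_sub_le hw.aestronglyMeasurable _ _ _).trans (add_le_add hρ₁ hρ₂)
    _ = ε := by simp only [ENNReal.add_halves]

end IsWeylAP

section Controls

variable {ι : Type*} {a b c : ι → ℝ → ℝ≥0∞}

/-- Smallness of the upper mean of `a τ` over some window length forces smallness of the upper mean
of `b τ` over all long windows, uniformly in `τ`. -/
def Controls (a b : ι → ℝ → ℝ≥0∞) : Prop :=
  ∀ ε > 0, ∃ δ > 0, ∀ l > 0, ∀ᶠ L in atTop, ∀ τ, supMean l (a τ) ≤ δ → supMean L (b τ) ≤ ε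

theorem Controls.refl (a : ι → ℝ → ℝ≥0∞) : Controls a a := fun ε hε ↦
  ⟨ε / 2, ENNReal.half_pos hε.ne', fun l hl ↦ (eventually_ge_atTop l).mono fun L hL τ hτ ↦
    calc supMean L (a τ) ≤ 2 * supMean l (a τ) := supMean_le_two_mul hl hL _
      _ ≤ 2 * (ε / 2) := by gcongr
      _ = ε := ENNReal.mul_div_cancel two_ne_zero ENNReal.ofNat_ne_top⟩

theorem Controls.trans (hab : Controls a b) (hbc : Controls b c) : Controls a c := by
  intro ε hε
  obtain ⟨δ, hδ, hbc⟩ := hbc ε hε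
  obtain ⟨δ', hδ', hab⟩ := hab δ hδ
  refine ⟨δ', hδ', fun l hl ↦ ?_⟩
  obtain ⟨m, hab, hm⟩ := ((hab l hl).and (eventually_gt_atTop 0)).exists
  exact (hbc m hm).mono fun L hL τ hτ ↦ hL τ (hab τ hτ)

theorem Controls.mono_ae (hab : Controls a b) (h : ∀ τ, c τ ≤ᵐ[volume] b τ) : Controls a c :=
  fun ε hε ↦
    let ⟨δ, hδ, hab⟩ := hab ε hε
    ⟨δ, hδ, fun l hl ↦ (hab l hl).mono fun _ hL τ hτ ↦ (supMean_mono_ae (h τ)).trans (hL τ hτ)⟩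

theorem Controls.const_mul (hab : Controls a b) {C : ℝ≥0∞} (hC : C ≠ ∞) :
    Controls a fun τ t ↦ C * b τ t := by
  rcases eq_or_ne C 0 with rfl | hC₀
  · exact fun ε _ ↦ ⟨1, one_pos, fun l _ ↦ .of_forall fun L τ _ ↦ by simp [supMean]⟩
  intro ε hε
  obtain ⟨δ, hδ, hab⟩ := hab (ε / C) (ENNReal.div_pos hε.ne' hC)
  refine ⟨δ, hδ, fun l hl ↦ (hab l hl).mono fun L hL τ hτ ↦ ?_⟩
  grw [supMean_const_mul hC, hL τ hτ, ENNReal.mul_div_cancel hC₀ hC]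

theorem Controls.add (hab : Controls a b) (hac : Controls a c) (hb : ∀ τ, AEMeasurable (b τ)) :
    Controls a (b + c) := by
  intro ε hε
  obtain ⟨δ, hδ, hab⟩ := hab (ε / 2) (ENNReal.half_pos hε.ne')
  obtain ⟨δ', hδ', hac⟩ := hac (ε / 2) (ENNReal.half_pos hε.ne')
  refine ⟨min δ δ', lt_min hδ hδ', fun l hl ↦ ?_⟩
  filter_upwards [hab l hl, hac l hl] with L hb' hc' τ hτ
  grw [Pi.add_apply, supMean_add_le (hb τ), hb' τ (hτ.trans (min_le_left _ _)),
    hc' τ (hτ.trans (min_le_right _ _)), ENNReal.add_halves]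

theorem Controls.sum {κ : Type*} {b : κ → ι → ℝ → ℝ≥0∞} (s : Finset κ)
    (hab : ∀ k ∈ s, Controls a (b k)) (hb : ∀ k τ, AEMeasurable (b k τ)) :
    Controls a fun τ t ↦ ∑ k ∈ s, b k τ t := by
  classical
  induction s using Finset.induction_on with
  | empty =>
    simpa using (Controls.refl a).const_mul ENNReal.zero_ne_top
  | insert k s hk ih =>
    simp only [Finset.sum_insert hk]
    exact (hab k (Finset.mem_insert_self k s)).add
      (ih fun j hj ↦ hab j (Finset.mem_insert_of_mem hj)) (hb k)

theorem Controls.of_forall_le_add (h : ∀ ε > 0, ∃ (c : ι → ℝ → ℝ≥0∞) (ψ : ℝ → ℝ≥0∞),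
    Controls a c ∧ (∀ τ, AEMeasurable (c τ)) ∧ (∀ᶠ L in atTop, supMean L ψ ≤ ε) ∧
      ∀ τ, b τ ≤ᵐ[volume] c τ + ψ) : Controls a b := by
  intro ε hε
  obtain ⟨c, ψ, hac, hc, hψ, hle⟩ := h (ε / 2) (ENNReal.half_pos hε.ne')
  obtain ⟨δ, hδ, hac⟩ := hac (ε / 2) (ENNReal.half_pos hε.ne')
  refine ⟨δ, hδ, fun l hl ↦ ?_⟩
  filter_upwards [hac l hl, hψ] with L hL hψL τ hτ
  grw [supMean_mono_ae (hle τ), supMean_add_le (hc τ), hL τ hτ, hψL, ENNReal.add_halves]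

end Controls

section TransDominated

variable {α β γ : Type*} [PseudoEMetricSpace α] [PseudoEMetricSpace β] [PseudoEMetricSpace γ]
  {z : ℝ → α} {v : ℝ → β} {w : ℝ → γ}

/-- `v` inherits its almost periods from `z`: a translation that almost preserves `z` in the mean
almost preserves `v`. -/
structure TransDominated (v : ℝ → β) (z : ℝ → α) : Prop where
  aestronglyMeasurable : AEStronglyMeasurable v
  controls : Controls (transCost z) (transCost v)

theorem TransDominated.refl (hz : AEStronglyMeasurable z) : TransDominated z z :=
  ⟨hz, .refl _⟩

theorem TransDominated.trans (hwv : TransDominated w v) (hvz : TransDominated v z) :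
    TransDominated w z :=
  ⟨hwv.aestronglyMeasurable, hvz.controls.trans hwv.controls⟩

theorem TransDominated.congr {v' : ℝ → β} (hv : TransDominated v z) (h : v =ᵐ[volume] v') :
    TransDominated v' z :=
  ⟨hv.aestronglyMeasurable.congr h,
    hv.controls.mono_ae fun τ ↦ (transCost_congr_ae h.symm τ).le⟩

theorem TransDominated.isWeylAP (hv : TransDominated v z) (hz : IsWeylAP z) : IsWeylAP v := by
  refine ⟨hv.aestronglyMeasurable, fun ε hε ↦ ?_⟩
  obtain ⟨δ, hδ, hvz⟩ := hv.controls ε hε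
  obtain ⟨l, hl, hT⟩ := hz.relDense δ hδ
  obtain ⟨L, hL, hL₀⟩ := ((hvz l hl).and (eventually_gt_atTop 0)).exists
  exact ⟨L, hL₀, hT.mono hL⟩

theorem TransDominated.comp {φ : β → γ} (hv : TransDominated v z) (hφ : Continuous φ) {C : ℝ≥0∞}
    (hC : C ≠ ∞) (h : ∀ x y, truncEDist (φ x) (φ y) ≤ C * truncEDist x y) :
    TransDominated (φ ∘ v) z :=
  ⟨hφ.comp_aestronglyMeasurable hv.aestronglyMeasurable,
    (hv.controls.const_mul hC).mono_ae fun _ ↦ ae_of_all _ fun _ ↦ h _ _⟩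

theorem TransDominated.prodMk (hv : TransDominated v z) (hw : TransDominated w z) :
    TransDominated (fun t ↦ (v t, w t)) z :=
  ⟨hv.aestronglyMeasurable.prodMk hw.aestronglyMeasurable,
    (hv.controls.add hw.controls (aemeasurable_transCost hv.aestronglyMeasurable)).mono_ae
      fun _ ↦ ae_of_all _ fun t ↦ truncEDist_prod_le (v t, w t) _⟩

theorem TransDominated.fst {p : ℝ → β × γ} (hp : TransDominated p z) :
    TransDominated (fun t ↦ (p t).1) z :=
  hp.comp continuous_fst ENNReal.one_ne_top fun x y ↦ by simpa using truncEDist_fst_le x y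

theorem TransDominated.snd {p : ℝ → β × γ} (hp : TransDominated p z) :
    TransDominated (fun t ↦ (p t).2) z :=
  hp.comp continuous_snd ENNReal.one_ne_top fun x y ↦ by simpa using truncEDist_snd_le x y

theorem truncEDist_nat_of_ne {m n : ℕ} (h : m ≠ n) : truncEDist m n = 1 := by
  rw [truncEDist, edist_dist, min_eq_left (ENNReal.one_le_ofReal.2 (Nat.pairwise_one_le_dist h))]

theorem TransDominated.natComp {p : ℝ → ℕ} (hp : TransDominated p z) (y : ℕ → β) :
    TransDominated (fun t ↦ y (p t)) z :=
  hp.comp (φ := y) continuous_of_discreteTopology ENNReal.one_ne_top fun m n ↦ by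
    rcases eq_or_ne m n with rfl | hmn
    · simp [truncEDist_self]
    · simpa [truncEDist_nat_of_ne hmn] using truncEDist_le_one _ _

open Classical in
theorem TransDominated.piecewise {A : Set ℝ} (hA : TransDominated (A.indicator (1 : ℝ → ℕ)) z)
    {v' : ℝ → β} (hv : TransDominated v z) (hv' : TransDominated v' z) :
    TransDominated (A.piecewise v v') z := by
  let φ : ℕ × β × β → β := fun q ↦ if q.1 = 0 then q.2.2 else q.2.1
  have hφ : Continuous φ := continuous_prod_of_discrete_left.2 fun n ↦ by
    rcases eq_or_ne n 0 with hn | hn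
    · simpa [φ, hn] using continuous_snd
    · simpa [φ, hn] using continuous_fst
  have hlip (q q' : ℕ × β × β) : truncEDist (φ q) (φ q') ≤ 1 * truncEDist q q' := by
    rw [one_mul]
    rcases eq_or_ne q.1 q'.1 with h | h
    · simp only [φ, h]
      split_ifs
      · exact (truncEDist_snd_le _ _).trans (truncEDist_snd_le q q')
      · exact (truncEDist_fst_le _ _).trans (truncEDist_snd_le q q')
    · calc truncEDist (φ q) (φ q') ≤ truncEDist q.1 q'.1 :=
            (truncEDist_le_one _ _).trans (truncEDist_nat_of_ne h).ge
        _ ≤ truncEDist q q' := truncEDist_fst_le q q'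
  convert (hA.prodMk (hv.prodMk hv')).comp hφ ENNReal.one_ne_top hlip using 1
  ext t
  by_cases ht : t ∈ A <;> simp [φ, ht]

theorem TransDominated.of_tendsto {h : ℕ → ℝ → β} {e : ℕ → ℝ≥0∞} (he : Tendsto e atTop (𝓝 0))
    (hh : ∀ n, TransDominated (h n) z) (hle : ∀ᵐ t, ∀ n, truncEDist (h n t) (v t) ≤ e n) :
    TransDominated v z := by
  refine ⟨aestronglyMeasurable_of_tendsto_ae atTop (fun n ↦ (hh n).aestronglyMeasurable)
    (hle.mono fun t ht ↦ ?_), .of_forall_le_add fun ε hε ↦ ?_⟩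
  · refine tendsto_iff_edist_tendsto_0.2 <| (tendsto_of_tendsto_of_tendsto_of_le_of_le
      tendsto_const_nhds he (fun _ ↦ zero_le) ht).congr' ?_
    filter_upwards [he.eventually_lt_const one_pos] with n hn
    exact (edist_eq_truncEDist_of_lt_one ((ht n).trans_lt hn)).symm
  · obtain ⟨n, hn⟩ := (he.eventually_le_const (ENNReal.half_pos hε.ne')).exists
    refine ⟨transCost (h n), fun _ ↦ ε, (hh n).controls,
      aemeasurable_transCost (hh n).aestronglyMeasurable,
      (eventually_gt_atTop 0).mono fun L hL ↦ (supMean_const hL ε).le, fun τ ↦ ?_⟩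
    filter_upwards [hle, ae_comp_add_right hle τ] with t ht htτ
    calc transCost v τ t
        ≤ truncEDist (v t) (h n t) + transCost (h n) τ t + truncEDist (h n (t + τ)) (v (t + τ)) :=
          truncEDist_triangle4 _ _ _ _
      _ ≤ ε / 2 + transCost (h n) τ t + ε / 2 := by
          rw [truncEDist_comm (v t)]
          gcongr
          exacts [(ht n).trans hn, (htτ n).trans hn]
      _ = transCost (h n) τ t + ε := by
          rw [add_comm (ε / 2), add_assoc, ENNReal.add_halves]

end TransDominated

section Thresholds

variable {α β : Type*} [PseudoEMetricSpace α] {w : ℝ → α}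

/-- Sliding a window by an almost period reduces its mean to that of an initial window. -/
theorem IsWeylAP.eventually_supMean_comp_le (hw : IsWeylAP w) {C : ℝ≥0∞} (hC : C ≠ ∞) {ε : ℝ≥0∞}
    (hε : 0 < ε) :
    ∀ᶠ L in atTop, ∀ v : α → ℝ≥0∞, v ≤ 1 → (∀ x y, v x ≤ v y + C * truncEDist x y) →
      supMean L (v ∘ w) ≤ ENNReal.ofReal (1 / L) * (∫⁻ t in Set.Icc 0 L, v (w t)) + ε := by
  obtain ⟨δ, hδ, hctrl⟩ :=
    ((Controls.refl (transCost w)).const_mul hC) (ε / 2) (ENNReal.half_pos hε.ne')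
  obtain ⟨l, hl, a, -, hT⟩ := hw.relDense δ hδ
  have ha_div : Tendsto (fun L : ℝ ↦ ENNReal.ofReal (a / L)) atTop (𝓝 0) := by
    simpa using ENNReal.tendsto_ofReal (tendsto_const_nhds.div_atTop tendsto_id (a := a))
  filter_upwards [hctrl l hl, eventually_gt_atTop 0,
    ha_div.eventually_le_const (ENNReal.half_pos hε.ne')] with L hL hL₀ haL v hv hvlip
  refine iSup_le fun ξ ↦ ?_
  obtain ⟨τ, ⟨hτ₁, hτ₂⟩, hτ⟩ := hT (-ξ)
  have hsub : Set.Icc (ξ + τ) (ξ + L + τ) ⊆ Set.Icc 0 L ∪ Set.Icc L (L + a) :=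
    (Set.Icc_subset_Icc (by linarith) (by linarith)).trans Set.Icc_subset_Icc_union_Icc
  have htail : ∫⁻ t in Set.Icc L (L + a), v (w t) ≤ ENNReal.ofReal a := by
    refine (lintegral_mono fun t ↦ hv (w t)).trans ?_
    simp
  have hcost := aemeasurable_transCost hw.aestronglyMeasurable τ
  calc ENNReal.ofReal (1 / L) * ∫⁻ t in Set.Icc ξ (ξ + L), v (w t)
      ≤ ENNReal.ofReal (1 / L) * ∫⁻ t in Set.Icc ξ (ξ + L),
          v (w (t + τ)) + C * transCost w τ t := by
        gcongr with t
        exact hvlip _ _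
    _ ≤ ENNReal.ofReal (1 / L) * ((∫⁻ t in Set.Icc 0 L, v (w t)) + ENNReal.ofReal a) + ε / 2 := by
        grw [lintegral_add_right' _ (hcost.const_mul C).restrict,
          setLIntegral_Icc_comp_add_right (fun t ↦ v (w t)) τ, mul_add, mean_le_supMean L _ ξ,
          hL τ hτ, lintegral_mono_set hsub, lintegral_union_le, ← htail]
    _ = ENNReal.ofReal (1 / L) * (∫⁻ t in Set.Icc 0 L, v (w t)) +
          (ENNReal.ofReal (a / L) + ε / 2) := by
        rw [mul_add, add_assoc, ← ENNReal.ofReal_mul (by positivity), one_div_mul_eq_div]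
    _ ≤ ENNReal.ofReal (1 / L) * (∫⁻ t in Set.Icc 0 L, v (w t)) + ε := by
        grw [haL, ENNReal.add_halves]

theorem lipschitzWith_of_le_truncEDist [PseudoEMetricSpace β] {φ : α → β} {C : NNReal}
    (hφ : ∀ x y, edist (φ x) (φ y) ≤ C * truncEDist x y) : LipschitzWith C φ := fun x y ↦
  (hφ x y).trans (by gcongr; exact truncEDist_le_edist x y)

/-- A bump around `r` of width `δ`. -/
def bump [PseudoEMetricSpace β] (δ : ℝ≥0∞) (r x : β) : ℝ≥0∞ := 1 - edist x r / δ

theorem bump_le_bump_add [PseudoEMetricSpace β] (δ : ℝ≥0∞) (r x y : β) :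
    bump δ r x ≤ bump δ r y + edist x y / δ := by
  refine tsub_le_iff_right.2 ?_
  calc (1 : ℝ≥0∞) ≤ bump δ r y + edist y r / δ := le_tsub_add
    _ ≤ bump δ r y + (edist x y + edist x r) / δ := by
        gcongr
        exact edist_triangle_left y r x
    _ = bump δ r y + edist x y / δ + edist x r / δ := by rw [ENNReal.add_div, add_assoc]

theorem indicator_le_two_mul_bump [PseudoEMetricSpace β] (δ : ℝ≥0∞)
    (r : β) (u : ℝ → β) (t : ℝ) :
    {t | edist (u t) r < δ / 2}.indicator 1 t ≤ 2 * bump δ r (u t) := by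
  refine Set.indicator_apply_le' (fun ht ↦ ?_) fun _ ↦ zero_le
  have hdiv : edist (u t) r / δ ≤ 2⁻¹ := ENNReal.div_le_of_le_mul' (le_of_lt ht)
  calc (1 : ℝ≥0∞) = 2 * (1 - 2⁻¹) := by
        rw [ENNReal.one_sub_inv_two, ENNReal.mul_inv_cancel two_ne_zero ENNReal.ofNat_ne_top]
    _ ≤ 2 * bump δ r (u t) := by unfold bump; gcongr

theorem bump_eq_zero [PseudoEMetricSpace β] {δ : ℝ≥0∞} (hδ : δ ≠ 0) (hδ' : δ ≠ ∞) {r x : β}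
    (h : δ ≤ edist x r) : bump δ r x = 0 :=
  tsub_eq_zero_of_le ((ENNReal.le_div_iff_mul_le (.inl hδ) (.inl hδ')).2 (by rwa [one_mul]))

theorem sum_bump_le_one [PseudoEMetricSpace β] {δ : ℝ≥0∞} (hδ : δ ≠ 0) (hδ' : δ ≠ ∞) {s : Finset β}
    (hs : (s : Set β).Pairwise fun r r' ↦ 2 * δ ≤ edist r r') (x : β) :
    ∑ r ∈ s, bump δ r x ≤ 1 := by
  classical
  by_cases h : ∃ r ∈ s, edist x r < δ
  · obtain ⟨r, hr, hxr⟩ := h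
    refine (Finset.sum_eq_single_of_mem r hr fun r' hr' hne ↦ ?_).trans_le tsub_le_self
    refine bump_eq_zero hδ hδ' (le_of_not_gt fun hlt ↦ (hs hr hr' hne.symm).not_gt ?_)
    calc edist r r' ≤ edist x r + edist x r' := edist_triangle_left _ _ _
      _ < δ + δ := ENNReal.add_lt_add hxr hlt
      _ = 2 * δ := (two_mul δ).symm
  · push Not at h
    rw [Finset.sum_eq_zero fun r hr ↦ bump_eq_zero hδ hδ' (h r hr)]
    exact zero_le

theorem aemeasurable_bump_comp [PseudoEMetricSpace β] {u : ℝ → β} (hu : AEStronglyMeasurable u)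
    (δ : ℝ≥0∞) (r : β) : AEMeasurable fun t ↦ bump δ r (u t) :=
  (((continuous_id.edist continuous_const).comp_aestronglyMeasurable hu).aemeasurable.div_const
    δ).const_sub 1

theorem exists_pairwise_two_mul_le_edist [EMetricSpace β] (s : Finset β) :
    ∃ δ : ℝ≥0∞, δ ≠ 0 ∧ δ ≠ ∞ ∧ (s : Set β).Pairwise fun r r' ↦ 2 * δ ≤ edist r r' := by
  refine ⟨min 1 (s : Set β).einfsep / 2,
    (ENNReal.half_pos (lt_min one_pos s.finite_toSet.einfsep_pos).ne').ne',
    ENNReal.div_ne_top (ne_top_of_le_ne_top ENNReal.one_ne_top (min_le_left _ _)) two_ne_zero,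
    fun r hr r' hr' hne ↦ ?_⟩
  rw [ENNReal.mul_div_cancel two_ne_zero ENNReal.ofNat_ne_top]
  exact (min_le_right _ _).trans (Set.einfsep_le_edist_of_mem hr hr' hne)

theorem le_four_mul_supMean_bump [PseudoEMetricSpace β] {u : ℝ → β} {δ ε : ℝ≥0∞} {r : β}
    (h : ∃ᶠ L in atTop, ε < supMean L ({t | edist (u t) r < δ / 2}.indicator 1)) {l : ℝ}
    (hl : 0 < l) : ε ≤ 4 * supMean l fun t ↦ bump δ r (u t) := by
  obtain ⟨L, hL, hlL⟩ := (h.and_eventually (eventually_ge_atTop l)).exists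
  calc ε ≤ supMean L fun t ↦ 2 * bump δ r (u t) :=
        hL.le.trans (supMean_mono (indicator_le_two_mul_bump δ r u))
    _ ≤ 2 * (2 * supMean l fun t ↦ bump δ r (u t)) := by
        grw [supMean_const_mul ENNReal.ofNat_ne_top, supMean_le_two_mul hl hlL]
    _ = 4 * supMean l fun t ↦ bump δ r (u t) := by rw [← mul_assoc]; norm_num

theorem sum_mean_bump_le_one [EMetricSpace β] {s : Finset β} {δ : ℝ≥0∞} (hδ : δ ≠ 0) (hδ' : δ ≠ ∞)
    (hsep : (s : Set β).Pairwise fun r r' ↦ 2 * δ ≤ edist r r') {u : ℝ → β}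
    (hu : AEStronglyMeasurable u) {L : ℝ} (hL : 0 < L) :
    ∑ r ∈ s, ENNReal.ofReal (1 / L) * ∫⁻ t in Set.Icc 0 L, bump δ r (u t) ≤ 1 := by
  calc ∑ r ∈ s, ENNReal.ofReal (1 / L) * ∫⁻ t in Set.Icc 0 L, bump δ r (u t)
      = ENNReal.ofReal (1 / L) * ∫⁻ t in Set.Icc 0 L, ∑ r ∈ s, bump δ r (u t) := by
        rw [← Finset.mul_sum,
          lintegral_finsetSum' _ fun r _ ↦ (aemeasurable_bump_comp hu δ r).restrict]
    _ ≤ ENNReal.ofReal (1 / L) * ∫⁻ _ in Set.Icc 0 L, 1 := by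
        gcongr
        exact sum_bump_le_one hδ hδ' hsep _
    _ = 1 := by
        rw [setLIntegral_one, Real.volume_Icc, sub_zero, ofReal_one_div_mul_ofReal hL]

theorem IsWeylAP.finite_setOf_concentrated [EMetricSpace β] (hw : IsWeylAP w) {φ : α → β}
    {C : NNReal} (hφ : ∀ x y, edist (φ x) (φ y) ≤ C * truncEDist x y) {ε : ℝ≥0∞} (hε : 0 < ε)
    (hε' : ε ≠ ∞) :
    {r | ∀ δ > 0, ∃ᶠ L in atTop,
      ε < supMean L ({t | edist (φ (w t)) r < δ}.indicator 1)}.Finite := by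
  by_contra hinf
  have hε₈ : 0 < ε / 4 / 2 := ENNReal.half_pos (ENNReal.div_pos hε.ne' (by simp)).ne'
  obtain ⟨n, hn⟩ := ENNReal.exists_nat_mul_gt hε₈.ne' ENNReal.one_ne_top
  obtain ⟨s, hs, hcard⟩ := Set.Infinite.exists_subset_card_eq hinf n
  obtain ⟨δ, hδ, hδ', hsep⟩ := exists_pairwise_two_mul_le_edist s
  obtain ⟨L, hL, hL₀⟩ := ((hw.eventually_supMean_comp_le (C := C / δ)
    (ENNReal.div_ne_top ENNReal.coe_ne_top hδ) hε₈).and (eventually_gt_atTop 0)).exists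
  have hmean (r) (hr : r ∈ s) :
      ε / 4 / 2 ≤ ENNReal.ofReal (1 / L) * ∫⁻ t in Set.Icc 0 L, bump δ r (φ (w t)) := by
    have hlip (x y : α) : bump δ r (φ x) ≤ bump δ r (φ y) + C / δ * truncEDist x y := by
      grw [bump_le_bump_add δ r (φ x) (φ y), hφ x y, ENNReal.mul_div_right_comm]
    refine (ENNReal.add_le_add_iff_right (a := ε / 4 / 2)
      (ENNReal.div_ne_top (ENNReal.div_ne_top hε' four_ne_zero) two_ne_zero)).1 ?_
    calc ε / 4 / 2 + ε / 4 / 2 = ε / 4 := ENNReal.add_halves _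
      _ ≤ supMean L (bump δ r ∘ φ ∘ w) := ENNReal.div_le_of_le_mul'
          (le_four_mul_supMean_bump (hs hr _ (ENNReal.half_pos hδ)) hL₀)
      _ ≤ _ := hL (bump δ r ∘ φ) (fun _ ↦ tsub_le_self) hlip
  have hmeas := (lipschitzWith_of_le_truncEDist hφ).continuous.comp_aestronglyMeasurable
    hw.aestronglyMeasurable
  refine hn.not_ge ?_
  calc (n : ℝ≥0∞) * (ε / 4 / 2) = ∑ _r ∈ s, ε / 4 / 2 := by
        rw [Finset.sum_const, hcard, nsmul_eq_mul]
    _ ≤ ∑ r ∈ s, ENNReal.ofReal (1 / L) * ∫⁻ t in Set.Icc 0 L, bump δ r (φ (w t)) :=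
        Finset.sum_le_sum hmean
    _ ≤ 1 := sum_mean_bump_le_one hδ hδ' hsep hmeas hL₀

/-- `r` is a generic threshold for `u` if the sets where `u` is `δ`-close to `r` have small upper
mean as `δ → 0`, so that the superlevel set of `u` at `r` is stable under perturbations of `u`. -/
def IsGenericThreshold (u : ℝ → ℝ) (r : ℝ) : Prop :=
  ∀ ε > 0, ∃ δ > 0, ∀ᶠ L in atTop, supMean L ({t | edist (u t) r < δ}.indicator 1) ≤ ε

theorem IsWeylAP.exists_isGenericThreshold (hw : IsWeylAP w) {φ : α → ℝ} {C : NNReal}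
    (hφ : ∀ x y, edist (φ x) (φ y) ≤ C * truncEDist x y) {a b : ℝ} (hab : a < b) :
    ∃ r ∈ Set.Ioo a b, IsGenericThreshold (φ ∘ w) r := by
  have hcountable := Set.countable_iUnion fun n : ℕ ↦
    (hw.finite_setOf_concentrated hφ (ε := (n + 1 : ℝ≥0∞)⁻¹) (by simp [ENNReal.inv_pos])
      (by simp)).countable
  obtain ⟨r, hr, hr'⟩ := Set.not_subset.1 fun h ↦
    hab.not_ge (Cardinal.Real.Ioo_countable_iff.1 (hcountable.mono h))
  refine ⟨r, hr, fun ε hε ↦ ?_⟩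
  obtain ⟨n, hn⟩ := ENNReal.exists_inv_nat_lt hε.ne'
  simp only [Set.mem_iUnion, Set.mem_ofPred_eq, not_exists, not_forall, not_frequently,
    not_lt] at hr'
  obtain ⟨δ, hδ, h⟩ := hr' n
  refine ⟨δ, hδ, h.mono fun L hL ↦ hL.trans (le_trans ?_ hn.le)⟩
  gcongr
  exact le_self_add

theorem edist_le_edist_of_le_of_lt {x y r : ℝ} (h : r ≤ x ∧ y < r ∨ x < r ∧ r ≤ y) :
    edist x r ≤ edist x y := by
  rw [edist_dist, edist_dist, Real.dist_eq, Real.dist_eq]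
  refine ENNReal.ofReal_le_ofReal ?_
  grind

theorem IsGenericThreshold.transDominated (hw : AEStronglyMeasurable w) {φ : α → ℝ} {C : NNReal}
    (hφ : ∀ x y, edist (φ x) (φ y) ≤ C * truncEDist x y) {r : ℝ}
    (hr : IsGenericThreshold (φ ∘ w) r) :
    TransDominated ({t | r ≤ φ (w t)}.indicator (1 : ℝ → ℕ)) w := by
  have hmeas := (lipschitzWith_of_le_truncEDist hφ).continuous.comp_aestronglyMeasurable hw
  refine ⟨aestronglyMeasurable_const.indicator₀
    (nullMeasurableSet_le aemeasurable_const hmeas.aemeasurable), .of_forall_le_add fun ε hε ↦ ?_⟩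
  obtain ⟨δ, hδ, hr⟩ := hr ε hε
  have hC : C / δ ≠ ∞ := ENNReal.div_ne_top ENNReal.coe_ne_top hδ.ne'
  refine ⟨fun τ t ↦ C / δ * transCost w τ t, _, (Controls.refl _).const_mul hC,
    fun τ ↦ (aemeasurable_transCost hw τ).const_mul _, hr, fun τ ↦ ae_of_all _ fun t ↦ ?_⟩
  rcases lt_or_ge (edist (φ (w t)) r) δ with hnear | hfar
  · exact (transCost_le_one _ _ _).trans (by simp [hnear])
  by_cases hcross : r ≤ φ (w t) ∧ φ (w (t + τ)) < r ∨ φ (w t) < r ∧ r ≤ φ (w (t + τ))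
  · have hδ' : δ ≠ ∞ := ne_top_of_le_ne_top (edist_ne_top _ _) hfar
    calc transCost _ τ t ≤ δ / δ :=
          (transCost_le_one _ _ _).trans (ENNReal.div_self hδ.ne' hδ').ge
      _ ≤ C * transCost w τ t / δ := by
          gcongr
          exact hfar.trans ((edist_le_edist_of_le_of_lt hcross).trans (hφ _ _))
      _ ≤ _ := by
          rw [ENNReal.mul_div_right_comm]
          exact le_self_add
  · have hsame : r ≤ φ (w t) ↔ r ≤ φ (w (t + τ)) := by grind
    simp [transCost, Set.indicator_apply, hsame, truncEDist_self]

theorem edist_toReal_le {f : α → ℝ≥0∞} {C : NNReal} (hf : ∀ x, f x ≠ ∞)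
    (hlip : ∀ x y, f x ≤ f y + C * truncEDist x y) (x y : α) :
    edist (f x).toReal (f y).toReal ≤ C * truncEDist x y := by
  have hC (x y : α) : C * truncEDist x y ≠ ∞ := by simp [ENNReal.mul_eq_top, truncEDist_ne_top]
  have hreal (x y : α) : (f x).toReal ≤ (f y).toReal + (C * truncEDist x y).toReal := by
    rw [← ENNReal.toReal_add (hf y) (hC x y)]
    exact ENNReal.toReal_mono (ENNReal.add_ne_top.2 ⟨hf y, hC x y⟩) (hlip x y)
  rw [edist_dist, Real.dist_eq]
  refine ENNReal.ofReal_le_of_le_toReal (abs_le.2 ⟨?_, ?_⟩)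
  · linarith [truncEDist_comm x y ▸ hreal y x]
  · linarith [hreal x y]

theorem IsWeylAP.exists_transDominated_indicator (hw : IsWeylAP w) {f : α → ℝ≥0∞} {C : NNReal}
    (hf : ∀ x, f x ≠ ∞) (hlip : ∀ x y, f x ≤ f y + C * truncEDist x y) {a b : ℝ≥0∞} (hab : a < b) :
    ∃ r ∈ Set.Ioo a b, TransDominated ({t | r ≤ f (w t)}.indicator (1 : ℝ → ℕ)) w := by
  obtain ⟨b', -, hab', hbb'⟩ := ENNReal.lt_iff_exists_real_btwn.1 hab
  have hlip' := edist_toReal_le hf hlip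
  obtain ⟨r, ⟨har, hrb⟩, hr⟩ := hw.exists_isGenericThreshold hlip'
    ((ENNReal.lt_ofReal_iff_toReal_lt hab.ne_top).1 hab')
  refine ⟨ENNReal.ofReal r, ⟨(ENNReal.lt_ofReal_iff_toReal_lt hab.ne_top).2 har,
    (ENNReal.ofReal_le_ofReal hrb.le).trans_lt hbb'⟩, ?_⟩
  simpa only [ENNReal.ofReal_le_iff_le_toReal (hf _)] using
    hr.transDominated hw.aestronglyMeasurable hlip'

end Thresholds

section StepFunctions

variable {α β : Type*} [PseudoEMetricSpace α] [PseudoEMetricSpace β] {w : ℝ → α} {z : ℝ → β}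

theorem truncEDist_indicator_one_of_xor {B : Set ℝ} {s t : ℝ} (h : ¬(s ∈ B ↔ t ∈ B)) :
    truncEDist (B.indicator (1 : ℝ → ℕ) s) (B.indicator 1 t) = 1 :=
  truncEDist_nat_of_ne fun heq ↦ h (by by_cases hs : s ∈ B <;> by_cases ht : t ∈ B <;> simp_all)

theorem exists_transDominated_forall_notMem {B : ℕ → Set ℝ}
    (hB : ∀ i, TransDominated ((B i).indicator (1 : ℝ → ℕ)) z)
    (htail : ∀ ε > 0, ∃ N : ℕ, ∀ᶠ L in atTop, supMean L ((⋂ i < N, B i).indicator 1) ≤ ε)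
    (h : ∀ t, ∃ i, t ∉ B i) : ∃ p : ℝ → ℕ, TransDominated p z ∧ ∀ t, t ∉ B (p t) := by
  classical
  have hmeas (i) : NullMeasurableSet (B i)ᶜ := by
    have := (hB i).aestronglyMeasurable.aemeasurable.nullMeasurable (measurableSet_singleton 0)
    convert this using 1
    ext t
    simp
  have hfind : NullMeasurable fun t ↦ Nat.find (h t) :=
    measurable_find (α := NullMeasurableSpace ℝ volume) h hmeas
  refine ⟨fun t ↦ Nat.find (h t), ⟨hfind.aemeasurable.aestronglyMeasurable,
    .of_forall_le_add fun ε hε ↦ ?_⟩, fun t ↦ Nat.find_spec (h t)⟩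
  obtain ⟨N, hN⟩ := htail ε hε
  have hcost (i τ) := aemeasurable_transCost (hB i).aestronglyMeasurable τ
  refine ⟨fun τ t ↦ ∑ i ∈ Finset.range N, transCost ((B i).indicator (1 : ℝ → ℕ)) τ t, _,
    .sum _ (fun i _ ↦ (hB i).controls) hcost,
    fun τ ↦ Finset.aemeasurable_fun_sum _ fun i _ ↦ hcost i τ, hN, fun τ ↦ ae_of_all _ fun t ↦ ?_⟩
  by_cases ht : t ∈ ⋂ i < N, B i
  · exact (transCost_le_one _ _ _).trans (by simp [ht])
  by_cases hsame : ∀ i < N, t ∈ B i ↔ t + τ ∈ B i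
  · obtain ⟨i, hiN, hi⟩ : ∃ i < N, t ∉ B i := by simpa using ht
    have heq : Nat.find (h t) = Nat.find (h (t + τ)) :=
      Nat.find_congr hi fun j hj ↦ not_congr (hsame j (hj.trans_lt hiN))
    simp [transCost, heq, truncEDist_self]
  · push Not at hsame
    obtain ⟨i, hiN, hi⟩ := hsame
    calc transCost (fun t ↦ Nat.find (h t)) τ t ≤ transCost ((B i).indicator (1 : ℝ → ℕ)) τ t :=
          (transCost_le_one _ _ _).trans (truncEDist_indicator_one_of_xor (by grind)).ge
      _ ≤ ∑ i ∈ Finset.range N, transCost ((B i).indicator (1 : ℝ → ℕ)) τ t :=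
          Finset.single_le_sum_of_canonicallyOrdered
            (f := fun i ↦ transCost ((B i).indicator (1 : ℝ → ℕ)) τ t) (Finset.mem_range.2 hiN)
      _ ≤ _ := le_self_add

theorem IsWeylAP.exists_supMean_comp_le_of_tendsto (hw : IsWeylAP w) {v : ℕ → α → ℝ≥0∞}
    {C : ℝ≥0∞} (hC : C ≠ ∞) (hv : ∀ n, v n ≤ 1)
    (hlip : ∀ n x y, v n x ≤ v n y + C * truncEDist x y)
    (hmeas : ∀ n, AEMeasurable (v n ∘ w))
    (hlim : ∀ᵐ t, Tendsto (fun n ↦ v n (w t)) atTop (𝓝 0)) {ε : ℝ≥0∞} (hε : 0 < ε) :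
    ∃ N, ∀ᶠ L in atTop, supMean L (v N ∘ w) ≤ ε := by
  have hε' : 0 < ε / 2 / 2 := ENNReal.half_pos (ENNReal.half_pos hε.ne').ne'
  obtain ⟨L, hL, hL₀⟩ :=
    ((hw.eventually_supMean_comp_le hC hε').and (eventually_gt_atTop 0)).exists
  have hmean : Tendsto (fun n ↦ ENNReal.ofReal (1 / L) * ∫⁻ t in Set.Icc 0 L, v n (w t)) atTop
      (𝓝 0) := by
    have := tendsto_lintegral_of_dominated_convergence' (μ := volume.restrict (Set.Icc 0 L))
      (fun _ ↦ 1) (fun n ↦ (hmeas n).restrict) (fun n ↦ ae_of_all _ fun t ↦ hv n (w t)) (by simp)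
      (ae_restrict_of_ae hlim)
    simpa using ENNReal.Tendsto.const_mul this (.inr ENNReal.ofReal_ne_top)
  obtain ⟨N, hN⟩ := (hmean.eventually_le_const hε').exists
  refine ⟨N, (eventually_supMean_le_two_mul hL₀ (v N ∘ w)).mono fun L' hL' ↦ hL'.trans ?_⟩
  grw [hL (v N) (hv N) (hlip N), hN, ENNReal.add_halves,
    ENNReal.mul_div_cancel two_ne_zero ENNReal.ofNat_ne_top]

/-- Truncated distance to the points `c 0, …, c n`. -/
def infTruncEDist (c : ℕ → α) (n : ℕ) (x : α) : ℝ≥0∞ := ⨅ i : Fin (n + 1), truncEDist x (c i)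

theorem infTruncEDist_le_add (c : ℕ → α) (n : ℕ) (x y : α) :
    infTruncEDist c n x ≤ infTruncEDist c n y + truncEDist x y := by
  simp only [infTruncEDist, ENNReal.iInf_add]
  exact iInf_mono fun i ↦ (truncEDist_triangle x y _).trans_eq (add_comm _ _)

theorem tendsto_infTruncEDist {c : ℕ → α} {x : α} (hx : x ∈ closure (Set.range c)) :
    Tendsto (fun n ↦ infTruncEDist c n x) atTop (𝓝 0) := by
  refine ENNReal.tendsto_nhds_zero.2 fun ε hε ↦ ?_
  obtain ⟨_, ⟨i, rfl⟩, hi⟩ := EMetric.mem_closure_iff.1 hx ε hε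
  filter_upwards [eventually_ge_atTop i] with n hn
  exact (iInf_le _ ⟨i, Nat.lt_succ_of_le hn⟩).trans ((truncEDist_le_edist _ _).trans hi.le)

theorem infTruncEDist_le_one (c : ℕ → α) (n : ℕ) (x : α) : infTruncEDist c n x ≤ 1 :=
  (iInf_le _ 0).trans (truncEDist_le_one _ _)

theorem aemeasurable_infTruncEDist_comp (hw : AEStronglyMeasurable w) (c : ℕ → α) (n : ℕ) :
    AEMeasurable (infTruncEDist c n ∘ w) :=
  .iInf fun _ : Fin (n + 1) ↦ aemeasurable_truncEDist hw aestronglyMeasurable_const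

theorem IsWeylAP.exists_supMean_infTruncEDist_le (hw : IsWeylAP w) {c : ℕ → α}
    (hc : ∀ t, w t ∈ closure (Set.range c)) {ε : ℝ≥0∞} (hε : 0 < ε) :
    ∃ N, ∀ᶠ L in atTop, supMean L (infTruncEDist c N ∘ w) ≤ ε :=
  hw.exists_supMean_comp_le_of_tendsto ENNReal.one_ne_top (infTruncEDist_le_one c)
    (fun n x y ↦ by rw [one_mul]; exact infTruncEDist_le_add c n x y)
    (aemeasurable_infTruncEDist_comp hw.aestronglyMeasurable c)
    (ae_of_all _ fun t ↦ tendsto_infTruncEDist (hc t)) hε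

theorem exists_forall_mem_closure_range (hw : StronglyMeasurable w) :
    ∃ c : ℕ → α, ∀ t, w t ∈ closure (Set.range c) := by
  obtain ⟨s, hs, hws⟩ := hw.isSeparable_range
  have hne : s.Nonempty := closure_nonempty_iff.1 ⟨w 0, hws ⟨0, rfl⟩⟩
  obtain ⟨c, rfl⟩ := hs.exists_eq_range hne
  exact ⟨c, fun t ↦ hws ⟨t, rfl⟩⟩

theorem IsWeylAP.exists_step_approx_of_stronglyMeasurable (hw : IsWeylAP w)
    (hw' : StronglyMeasurable w) {ε : ℝ≥0∞} (hε : 0 < ε) :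
    ∃ (p : ℝ → ℕ) (c : ℕ → α), TransDominated p w ∧ ∀ t, truncEDist (w t) (c (p t)) < ε := by
  classical
  obtain ⟨e, he, heε⟩ := exists_between hε
  obtain ⟨c, hc⟩ := exists_forall_mem_closure_range hw'
  have hlip (i : ℕ) (x y : α) :
      truncEDist x (c i) ≤ truncEDist y (c i) + (1 : NNReal) * truncEDist x y := by
    rw [ENNReal.coe_one, one_mul, add_comm]
    exact truncEDist_triangle _ _ _
  choose r hr hdom using fun i ↦ hw.exists_transDominated_indicator
    (fun x ↦ truncEDist_ne_top x (c i)) (hlip i) heε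
  have hex (t : ℝ) : ∃ i, t ∉ {t | r i ≤ truncEDist (w t) (c i)} := by
    obtain ⟨_, ⟨i, rfl⟩, hi⟩ := EMetric.mem_closure_iff.1 (hc t) e he
    exact ⟨i, not_le.2 ((truncEDist_le_edist _ _).trans_lt (hi.trans (hr i).1))⟩
  have htail (η : ℝ≥0∞) (hη : 0 < η) : ∃ N : ℕ, ∀ᶠ L in atTop,
      supMean L ((⋂ i < N, {t | r i ≤ truncEDist (w t) (c i)}).indicator 1) ≤ η := by
    obtain ⟨N, hN⟩ := hw.exists_supMean_infTruncEDist_le hc (ENNReal.mul_pos he.ne' hη.ne')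
    refine ⟨N + 1, hN.mono fun L hL ↦ ?_⟩
    calc supMean L ((⋂ i < N + 1, {t | r i ≤ truncEDist (w t) (c i)}).indicator 1)
        ≤ supMean L fun t ↦ e⁻¹ * infTruncEDist c N (w t) := by
          refine supMean_mono fun t ↦ Set.indicator_apply_le' (fun ht ↦ ?_) fun _ ↦ zero_le
          simp only [Set.mem_iInter] at ht
          rw [Pi.one_apply, ← ENNReal.inv_mul_cancel he.ne' heε.ne_top]
          gcongr
          exact le_iInf fun i ↦ (hr i).1.le.trans (ht i i.2)
      _ ≤ η := by
          grw [supMean_const_mul (ENNReal.inv_ne_top.2 he.ne')]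
          exact (ENNReal.inv_mul_le_iff he.ne' heε.ne_top).2 hL
  obtain ⟨p, hp, hpB⟩ := exists_transDominated_forall_notMem hdom htail hex
  exact ⟨p, c, hp, fun t ↦ (not_le.1 (hpB t)).trans (hr (p t)).2⟩

theorem IsWeylAP.exists_step_approx (hw : IsWeylAP w) {ε : ℝ≥0∞} (hε : 0 < ε) :
    ∃ (p : ℝ → ℕ) (c : ℕ → α), TransDominated p w ∧ ∀ᵐ t, truncEDist (w t) (c (p t)) < ε := by
  have hmk := hw.aestronglyMeasurable.ae_eq_mk
  have hdom := (TransDominated.refl hw.aestronglyMeasurable).congr hmk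
  obtain ⟨p, c, hp, hc⟩ := (hdom.isWeylAP hw).exists_step_approx_of_stronglyMeasurable
    hw.aestronglyMeasurable.stronglyMeasurable_mk hε
  exact ⟨p, c, hp.trans hdom, hmk.mono fun t ht ↦ ht ▸ hc t⟩

end StepFunctions

section ApproximateSelection

variable {U γ : Type*} [PseudoEMetricSpace γ] {z : ℝ → γ}

theorem exists_mem_edist_le_infEDist_add [PseudoEMetricSpace U] {A : Set U} (hA : A.Nonempty)
    (x : U) {ε : ℝ≥0∞} (hε : ε ≠ 0) : ∃ y ∈ A, edist x y ≤ Metric.infEDist x A + ε := by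
  rcases eq_or_ne (Metric.infEDist x A) ∞ with htop | htop
  · obtain ⟨y, hy⟩ := hA
    exact ⟨y, hy, by simp [htop]⟩
  · obtain ⟨y, hy, hlt⟩ := Metric.infEDist_lt_iff.1 (ENNReal.lt_add_right htop hε)
    exact ⟨y, hy, hlt.le⟩

theorem tendsto_const_div_two_pow {C : ℝ≥0∞} (hC : C ≠ ∞) :
    Tendsto (fun n : ℕ ↦ C / 2 ^ n) atTop (𝓝 0) := by
  simpa [div_eq_mul_inv, ENNReal.inv_pow] using ENNReal.Tendsto.const_mul
    (ENNReal.tendsto_pow_atTop_nhds_zero_of_lt_one ENNReal.one_half_lt_one) (.inr hC)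

theorem TransDominated.exists_edist_le_geometric [PseudoEMetricSpace U] [CompleteSpace U]
    {h : ℕ → ℝ → U} (hh : ∀ n, TransDominated (h n) z) {C : ℝ≥0∞} (hC : C ≠ ∞)
    (hle : ∀ᵐ t, ∀ n, edist (h n t) (h (n + 1) t) ≤ C / 2 ^ n) :
    ∃ f, TransDominated f z ∧ ∀ᵐ t, ∀ n, edist (h n t) (f t) ≤ 2 * C / 2 ^ n := by
  have hlim (t : ℝ) : ∃ y, (∀ n, edist (h n t) (h (n + 1) t) ≤ C / 2 ^ n) →
      ∀ n, edist (h n t) y ≤ 2 * C / 2 ^ n := by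
    by_cases ht : ∀ n, edist (h n t) (h (n + 1) t) ≤ C / 2 ^ n
    · obtain ⟨y, hy⟩ := cauchySeq_tendsto_of_complete (cauchySeq_of_edist_le_geometric_two C hC ht)
      exact ⟨y, fun _ ↦ edist_le_of_edist_le_geometric_two_of_tendsto C ht hy⟩
    · exact ⟨h 0 t, fun ht' ↦ absurd ht' ht⟩
  choose f hf using hlim
  have hle' : ∀ᵐ t, ∀ n, edist (h n t) (f t) ≤ 2 * C / 2 ^ n := hle.mono hf
  refine ⟨f, .of_tendsto (tendsto_const_div_two_pow (ENNReal.mul_ne_top ENNReal.ofNat_ne_top hC)) hh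
    (hle'.mono fun t ht n ↦ (truncEDist_le_edist _ _).trans (ht n)), hle'⟩

variable [EMetricSpace U]

theorem exists_near_selection_of_edist_le (x : U) (A : Closeds U) {δ : ℝ≥0∞} (hδ : δ ≠ 0)
    (hδ' : δ ≠ ∞) :
    ∃ y, ∀ (x' : U) (B : Closeds U), (B : Set U).Nonempty → edist x' x ≤ δ → edist B A ≤ δ →
      Metric.infEDist y B ≤ δ ∧ edist x' y ≤ Metric.infEDist x' B + 4 * δ := by
  rcases (A : Set U).eq_empty_or_nonempty with hA | hA
  · refine ⟨x, fun x' B hB _ hBA ↦ absurd hA (Set.Nonempty.ne_empty ?_)⟩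
    exact Metric.nonempty_of_hausdorffEDist_ne_top hB (ne_top_of_le_ne_top hδ' hBA)
  obtain ⟨y, hyA, hy⟩ := exists_mem_edist_le_infEDist_add hA x hδ
  refine ⟨y, fun x' B _ hx hBA ↦ ⟨?_, ?_⟩⟩
  · rw [edist_comm] at hBA
    exact (Metric.infEDist_le_hausdorffEDist_of_mem hyA).trans hBA
  · calc edist x' y ≤ edist x' x + edist x y := edist_triangle _ _ _
      _ ≤ δ + ((Metric.infEDist x' B + δ + δ) + δ) := by
          grw [hy, Metric.infEDist_le_infEDist_add_edist (x := x) (y := x'),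
            Metric.infEDist_le_infEDist_add_hausdorffEDist (s := (B : Set U)) (t := A),
            ← Closeds.edist_eq,
            edist_comm x x', hx, hBA]
      _ = Metric.infEDist x' B + 4 * δ := by ring

theorem exists_transDominated_infEDist_le (hz : IsWeylAP z) {F : ℝ → Closeds U}
    (hF : TransDominated F z) (hne : ∀ t, (F t : Set U).Nonempty) {h : ℝ → U}
    (hh : TransDominated h z) {ε : ℝ≥0∞} (hε : 0 < ε) :
    ∃ h', TransDominated h' z ∧ ∀ᵐ t, Metric.infEDist (h' t) (F t) ≤ ε ∧
      edist (h t) (h' t) ≤ Metric.infEDist (h t) (F t) + ε := by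
  obtain ⟨δ, hδ, hδ₁, hδε⟩ : ∃ δ > 0, δ ≤ 1 ∧ 4 * δ ≤ ε := by
    refine ⟨min 1 (ε / 4), lt_min one_pos (ENNReal.div_pos hε.ne' (by simp)), min_le_left _ _, ?_⟩
    grw [min_le_right, ENNReal.mul_div_cancel four_ne_zero ENNReal.ofNat_ne_top]
  have hpair := hh.prodMk hF
  obtain ⟨p, c, hp, hc⟩ := (hpair.isWeylAP hz).exists_step_approx hδ
  choose y hy using fun n ↦ exists_near_selection_of_edist_le (c n).1 (c n).2 hδ.ne'
    (ne_top_of_le_ne_top ENNReal.one_ne_top hδ₁)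
  refine ⟨fun t ↦ y (p t), (hp.natComp y).trans hpair, hc.mono fun t ht ↦ ?_⟩
  rw [← edist_eq_truncEDist_of_lt_one (ht.trans_le hδ₁)] at ht
  obtain ⟨hx, hA⟩ := max_le_iff.1 ht.le
  obtain ⟨hyF, hyh⟩ := hy (p t) (h t) (F t) (hne t) hx hA
  exact ⟨hyF.trans (le_trans (le_mul_of_one_le_left' (by norm_num)) hδε), by grw [hyh, hδε]⟩

theorem exists_seq_transDominated_infEDist_le (hz : IsWeylAP z) {F : ℝ → Closeds U}
    (hF : TransDominated F z) (hne : ∀ t, (F t : Set U).Nonempty) {g : ℝ → U}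
    (hg : TransDominated g z) {C : ℝ≥0∞} (hC : 0 < C) :
    ∃ h : ℕ → ℝ → U, h 0 = g ∧ (∀ n, TransDominated (h n) z) ∧
      ∀ᵐ t, ∀ n, Metric.infEDist (h (n + 1) t) (F t) ≤ C / 2 ^ n ∧
        edist (h n t) (h (n + 1) t) ≤ Metric.infEDist (h n t) (F t) + C / 2 ^ n := by
  choose next hnext using fun (n : ℕ) (h : {h : ℝ → U // TransDominated h z}) ↦
    exists_transDominated_infEDist_le hz hF hne h.2
      (ENNReal.div_pos hC.ne' (ENNReal.pow_ne_top (n := n) ENNReal.ofNat_ne_top) : 0 < C / 2 ^ n)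
  let h : ℕ → {h : ℝ → U // TransDominated h z} :=
    Nat.rec ⟨g, hg⟩ fun n h ↦ ⟨next n h, (hnext n h).1⟩
  exact ⟨fun n ↦ (h n).1, rfl, fun n ↦ (h n).2, ae_all_iff.2 fun n ↦ (hnext n (h n)).2⟩

variable [CompleteSpace U]

theorem exists_transDominated_mem_edist_le (hz : IsWeylAP z) {F : ℝ → Closeds U}
    (hF : TransDominated F z) (hne : ∀ t, (F t : Set U).Nonempty) {g : ℝ → U}
    (hg : TransDominated g z) {ε : ℝ≥0∞} (hε : 0 < ε) :
    ∃ f, TransDominated f z ∧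
      ∀ᵐ t, f t ∈ (F t : Set U) ∧ edist (g t) (f t) ≤ Metric.infEDist (g t) (F t) + ε := by
  obtain ⟨C, hC, hCε, hC'⟩ : ∃ C, 0 < C ∧ 5 * C ≤ ε ∧ C ≠ ∞ := by
    refine ⟨min 1 (ε / 5), lt_min one_pos (ENNReal.div_pos hε.ne' (by simp)), ?_,
      ne_top_of_le_ne_top ENNReal.one_ne_top (min_le_left _ _)⟩
    grw [min_le_right, ENNReal.mul_div_cancel (by norm_num) ENNReal.ofNat_ne_top]
  obtain ⟨h, rfl, hh, hstep⟩ := exists_seq_transDominated_infEDist_le hz hF hne hg hC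
  obtain ⟨f, hf, hlim⟩ := TransDominated.exists_edist_le_geometric (fun n ↦ hh (n + 1))
    (ENNReal.mul_ne_top ENNReal.ofNat_ne_top hC' : 2 * C ≠ ∞) (hstep.mono fun t ht n ↦ by
      grw [(ht (n + 1)).2, (ht n).1, pow_succ, ENNReal.div_le_div_left (le_mul_of_one_le_right'
        one_le_two), ← two_mul, mul_div_assoc])
  refine ⟨f, hf, ?_⟩
  filter_upwards [hstep, hlim] with t ht hlt
  constructor
  · refine (Metric.mem_iff_infEDist_zero_of_closed (F t).isClosed).2 (le_antisymm ?_ zero_le)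
    have htend : Tendsto (fun n : ℕ ↦ C / 2 ^ n + 2 * (2 * C) / 2 ^ n) atTop (𝓝 0) := by
      simpa using (tendsto_const_div_two_pow hC').add
        (tendsto_const_div_two_pow (by finiteness : 2 * (2 * C) ≠ ∞))
    refine ge_of_tendsto' htend fun n ↦ ?_
    grw [Metric.infEDist_le_infEDist_add_edist (y := h (n + 1) t), (ht n).1, edist_comm, hlt n]
  · calc edist (h 0 t) (f t) ≤ edist (h 0 t) (h 1 t) + edist (h 1 t) (f t) :=
          edist_triangle _ _ _
      _ ≤ (Metric.infEDist (h 0 t) (F t) + C / 2 ^ 0) + 2 * (2 * C) / 2 ^ 0 :=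
          add_le_add (ht 0).2 (hlt 0)
      _ = Metric.infEDist (h 0 t) (F t) + 5 * C := by simp only [pow_zero, div_one]; ring
      _ ≤ Metric.infEDist (h 0 t) (F t) + ε := by grw [hCε]

end ApproximateSelection

section Patching

variable {U γ : Type*} [PseudoEMetricSpace γ] {z : ℝ → γ}

open Classical in
/-- The function that equals `φ k` on `A k \ A (k - 1)` for `k ≤ n` and `g` off `A n`, for an
increasing sequence `A`. -/
def patch (A : ℕ → Set ℝ) (φ : ℕ → ℝ → U) (g : ℝ → U) : ℕ → ℝ → U
  | 0 => (A 0).piecewise (φ 0) g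
  | n + 1 => (A n).piecewise (patch A φ g n) ((A (n + 1)).piecewise (φ (n + 1)) g)

variable {A : ℕ → Set ℝ} {φ : ℕ → ℝ → U} {g : ℝ → U} {n : ℕ} {t : ℝ}

theorem TransDominated.patch [PseudoEMetricSpace U]
    (hA : ∀ n, TransDominated ((A n).indicator (1 : ℝ → ℕ)) z)
    (hφ : ∀ n, TransDominated (φ n) z) (hg : TransDominated g z) (n : ℕ) :
    TransDominated (patch A φ g n) z := by
  induction n with
  | zero => exact (hA 0).piecewise (hφ 0) hg
  | succ n ih => exact (hA n).piecewise ih ((hA (n + 1)).piecewise (hφ (n + 1)) hg)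

theorem patch_of_notMem (hA : Monotone A) (ht : t ∉ A n) : patch A φ g n t = g t := by
  cases n with
  | zero => simp [patch, ht]
  | succ n =>
    have ht' : t ∉ A n := fun h ↦ ht (hA n.le_succ h)
    simp [patch, ht, ht']

theorem exists_patch_eq_of_mem (ht : t ∈ A n) : ∃ k, t ∈ A k ∧ patch A φ g n t = φ k t := by
  induction n with
  | zero => exact ⟨0, ht, by simp [patch, ht]⟩
  | succ n ih =>
    by_cases htn : t ∈ A n
    · simpa [patch, htn] using ih htn
    · exact ⟨n + 1, ht, by simp [patch, htn, ht]⟩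

theorem patch_eq_of_le (hA : Monotone A) (ht : t ∈ A n) {m : ℕ} (hnm : n ≤ m) :
    patch A φ g m t = patch A φ g n t := by
  induction m, hnm using Nat.le_induction with
  | base => rfl
  | succ m hnm ih => simp [patch, hA hnm ht, ih]

theorem edist_patch_succ_le [PseudoEMetricSpace U] (hA : Monotone A) {C : ℝ≥0∞}
    (h : t ∉ A n → t ∈ A (n + 1) → edist (g t) (φ (n + 1) t) ≤ C) :
    edist (patch A φ g n t) (patch A φ g (n + 1) t) ≤ C := by
  by_cases ht : t ∈ A n
  · simp [patch, ht]
  by_cases ht' : t ∈ A (n + 1)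
  · rw [patch_of_notMem hA ht]
    simpa [patch, ht, ht'] using h ht ht'
  · simp [patch_of_notMem hA ht, patch_of_notMem hA ht']

theorem exists_transDominated_patch [EMetricSpace U] [CompleteSpace U] (hmono : Monotone A)
    (hA : ∀ n, TransDominated ((A n).indicator (1 : ℝ → ℕ)) z)
    (hφ : ∀ n, TransDominated (φ n) z) (hg : TransDominated g z) {C : ℝ≥0∞} (hC : C ≠ ∞)
    (h : ∀ᵐ t, ∀ n, t ∉ A n → t ∈ A (n + 1) → edist (g t) (φ (n + 1) t) ≤ C / 2 ^ n) :
    ∃ f, TransDominated f z ∧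
      ∀ᵐ t, (∃ n, t ∈ A n ∧ f t = φ n t) ∨ (∀ n, t ∉ A n) ∧ f t = g t := by
  obtain ⟨f, hf, hlim⟩ := TransDominated.exists_edist_le_geometric (TransDominated.patch hA hφ hg)
    hC (h.mono fun t ht n ↦ edist_patch_succ_le hmono (ht n))
  refine ⟨f, hf, hlim.mono fun t ht ↦ ?_⟩
  have heq {y : U} (hy : ∀ᶠ m in atTop, patch A φ g m t = y) : f t = y := by
    have := tendsto_iff_edist_tendsto_0.2 <| tendsto_of_tendsto_of_tendsto_of_le_of_le
      tendsto_const_nhds (tendsto_const_div_two_pow (by finiteness)) (fun _ ↦ zero_le) ht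
    exact tendsto_nhds_unique this (tendsto_nhds_of_eventually_eq hy)
  by_cases hmem : ∃ n, t ∈ A n
  · obtain ⟨n, hn⟩ := hmem
    obtain ⟨k, hk, hpatch⟩ := exists_patch_eq_of_mem (φ := φ) (g := g) hn
    refine .inl ⟨k, hk, heq ((eventually_ge_atTop n).mono fun m hm ↦ ?_)⟩
    exact (patch_eq_of_le hmono hn hm).trans hpatch
  · push Not at hmem
    exact .inr ⟨hmem, heq (.of_forall fun m ↦ patch_of_notMem hmono (hmem m))⟩

end Patching

section Selection

variable {U γ : Type*} [EMetricSpace U] [PseudoEMetricSpace γ] {z : ℝ → γ}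

/-- The truncated gap between a point and a closed set. -/
def truncInfEDist (q : U × Closeds U) : ℝ≥0∞ := min 1 (Metric.infEDist q.1 q.2)

theorem truncInfEDist_ne_top (q : U × Closeds U) : truncInfEDist q ≠ ∞ :=
  ne_top_of_le_ne_top ENNReal.one_ne_top (min_le_left _ _)

theorem infEDist_lt_of_truncInfEDist_lt {q : U × Closeds U} {ε : ℝ≥0∞}
    (h : truncInfEDist q < ε) (hε : ε ≤ 1) : Metric.infEDist q.1 q.2 < ε :=
  (min_lt_iff.1 h).resolve_left hε.not_gt

theorem truncInfEDist_le_add (q q' : U × Closeds U) :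
    truncInfEDist q ≤ truncInfEDist q' + (2 : NNReal) * truncEDist q q' := by
  rcases (truncEDist_le_one q q').eq_or_lt with h | h
  · calc truncInfEDist q ≤ 1 := min_le_left _ _
      _ ≤ (2 : NNReal) * truncEDist q q' := by simp [h]
      _ ≤ _ := le_add_self
  rw [← edist_eq_truncEDist_of_lt_one h, truncInfEDist, truncInfEDist, ← min_add_add_right]
  refine min_le_min le_self_add ?_
  obtain ⟨hx, hA⟩ := max_le_iff.1 (le_refl (edist q q'))
  grw [Metric.infEDist_le_infEDist_add_edist (y := q'.1),
    Metric.infEDist_le_infEDist_add_hausdorffEDist (s := (q'.2 : Set U)), ← Closeds.edist_eq,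
    edist_comm q'.2, hx, hA, add_assoc, ← two_mul]
  rfl

theorem one_div_two_pow_succ_lt (n : ℕ) : (1 : ℝ≥0∞) / 2 ^ (n + 1) < 1 / 2 ^ n := by
  simp only [one_div]
  exact ENNReal.inv_lt_inv.2 (mod_cast Nat.pow_lt_pow_right one_lt_two n.lt_succ_self)

theorem mem_of_forall_infEDist_le_one_div_two_pow {A : Closeds U} {x : U}
    (h : ∀ n : ℕ, Metric.infEDist x A ≤ 1 / 2 ^ n) : x ∈ (A : Set U) :=
  (Metric.mem_iff_infEDist_zero_of_closed A.isClosed).2 <| le_antisymm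
    (ge_of_tendsto' (tendsto_const_div_two_pow ENNReal.one_ne_top) h) zero_le

theorem exists_selection [CompleteSpace U] (hz : IsWeylAP z) {F : ℝ → Closeds U}
    (hF : TransDominated F z) (hne : ∀ t, (F t : Set U).Nonempty) {g : ℝ → U}
    (hg : TransDominated g z) {η : ℝ≥0∞ → ℝ≥0∞}
    (hη : ∀ c > 0, ∃ ε > 0, ∀ x ≥ c, x ≠ ∞ → ε ≤ η x) :
    ∃ f, TransDominated f z ∧ ∀ᵐ t, f t ∈ (F t : Set U) ∧
      edist (g t) (f t) ≤ Metric.infEDist (g t) (F t) + η (Metric.infEDist (g t) (F t)) := by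
  have hpair := hg.prodMk hF
  choose r hr hA using fun n : ℕ ↦ (hpair.isWeylAP hz).exists_transDominated_indicator
    truncInfEDist_ne_top truncInfEDist_le_add (one_div_two_pow_succ_lt n)
  choose e he heη using fun n ↦ hη (r n) (pos_of_gt (hr n).1)
  choose φ hφ hφF using fun n ↦ exists_transDominated_mem_edist_le hz hF hne hg
    (lt_min (he n) (pos_of_gt (hr n).1))
  have hr_anti : Antitone r :=
    antitone_nat_of_succ_le fun n ↦ ((hr (n + 1)).2.trans (hr n).1).le
  have hmono : Monotone fun n ↦ {t | r n ≤ truncInfEDist (g t, F t)} :=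
    fun m n hmn t ht ↦ (hr_anti hmn).trans ht
  have hgap {n : ℕ} {t : ℝ} (h : truncInfEDist (g t, F t) < r n) :
      Metric.infEDist (g t) (F t) < 1 / 2 ^ n :=
    infEDist_lt_of_truncInfEDist_lt (h.trans (hr n).2) (by simp [one_le_pow₀])
  have hstep : ∀ᵐ t, ∀ n, t ∉ {t | r n ≤ truncInfEDist (g t, F t)} →
      t ∈ {t | r (n + 1) ≤ truncInfEDist (g t, F t)} →
      edist (g t) (φ (n + 1) t) ≤ 2 / 2 ^ n := (ae_all_iff.2 hφF).mono fun t ht n hn _ ↦ by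
    grw [(ht (n + 1)).2, hgap (not_le.1 hn), min_le_right, hr_anti n.le_succ, (hr n).2,
      ← ENNReal.add_div, one_add_one_eq_two]
  obtain ⟨f, hf, hfeq⟩ := exists_transDominated_patch hmono (fun n ↦ (hA n).trans hpair) hφ hg
    ENNReal.ofNat_ne_top hstep
  refine ⟨f, hf, ?_⟩
  filter_upwards [hfeq, ae_all_iff.2 hφF] with t ht htφ
  obtain ⟨n, hn, hfn⟩ | ⟨hn, hfg⟩ := ht
  · refine hfn ▸ ⟨(htφ n).1, ?_⟩
    rcases eq_or_ne (Metric.infEDist (g t) (F t)) ∞ with htop | htop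
    · simp [htop]
    · grw [(htφ n).2, min_le_left, heη n _ (hn.trans (min_le_right _ _)) htop]
  · rw [hfg]
    exact ⟨mem_of_forall_infEDist_le_one_div_two_pow fun n ↦ (hgap (not_le.1 (hn n))).le, by simp⟩

end Selection

section CStarAlgebra

variable {A : Type*}

theorem exists_characterSpace_apply_ne_zero [CommCStarAlgebra A] {a : A} (ha : a ≠ 0) :
    ∃ φ : WeakDual.characterSpace ℂ A, φ a ≠ 0 := by
  by_contra! h
  exact ha ((gelfandTransform_isometry A).injective (by ext φ; simpa using h φ))

theorem exists_starAlgHom_apply_ne_zero [CStarAlgebra A] {s : Set A}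
    (hs : ∀ a ∈ s, ∀ b ∈ s, Commute a b) (hs' : ∀ a ∈ s, ∀ b ∈ s, Commute a (star b))
    {a : A} (ha : a ∈ s) (ha0 : a ≠ 0) :
    ∃ B : StarSubalgebra ℂ A, ∃ hsB : s ⊆ B, ∃ φ : B →⋆ₐ[ℂ] ℂ, φ ⟨a, hsB ha⟩ ≠ 0 ∧
      ∀ b : B, ‖φ b‖ ≤ ‖b‖ := by
  have := StarAlgebra.isMulCommutative_adjoin ℂ hs hs'
  let B := (StarAlgebra.adjoin ℂ s).topologicalClosure
  have : IsClosed (B : Set A) := StarSubalgebra.isClosed_topologicalClosure _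
  let : CommCStarAlgebra B :=
    { (inferInstance : CStarAlgebra B) with
      mul_comm := (StarSubalgebra.commRingTopologicalClosure _ mul_comm').mul_comm }
  have hsB : s ⊆ B :=
    (StarAlgebra.subset_adjoin ℂ s).trans (StarSubalgebra.le_topologicalClosure _)
  obtain ⟨φ, hφ⟩ := exists_characterSpace_apply_ne_zero (a := (⟨a, hsB ha⟩ : B))
    fun h ↦ ha0 (congrArg Subtype.val h)
  exact ⟨B, hsB, StarAlgHomClass.toStarAlgHom φ, hφ, NonUnitalStarAlgHom.norm_apply_le φ⟩

theorem exists_circle_addChar_coe_eq {G : Type*} [AddCommGroup G] (χ : AddChar G ℂ)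
    (hχ : ∀ x, star (χ x) = χ (-x)) : ∃ ψ : AddChar G Circle, ∀ x, (ψ x : ℂ) = χ x := by
  have hmem (x) : χ x ∈ Submonoid.unitSphere ℂ := by
    have : ‖χ x‖ * ‖χ x‖ = 1 := by
      rw [← CStarRing.norm_star_mul_self, hχ, ← χ.map_add_eq_mul, neg_add_cancel,
        χ.map_zero_eq_one, norm_one]
    exact mem_sphere_zero_iff_norm.2 (by nlinarith [norm_nonneg (χ x)])
  exact ⟨{ toFun := fun x ↦ ⟨χ x, hmem x⟩
           map_zero_eq_one' := Subtype.ext χ.map_zero_eq_one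
           map_add_eq_mul' := fun x y ↦ Subtype.ext (χ.map_add_eq_mul x y) }, fun _ ↦ rfl⟩

theorem exists_addChar_norm_sub_le [CStarAlgebra A] {G : Type*} [AddCommGroup G]
    (u : AddChar G A) (hu : ∀ x, star (u x) = u (-x)) {T : A} (hT : T ≠ 0) [IsStarNormal T]
    (huT : ∀ x, Commute (u x) T) :
    ∃ ψ : AddChar G Circle, ∃ C : NNReal, ∀ x, ∀ c : ℂ,
      ‖(ψ x : ℂ) - c‖ ≤ C * ‖u x * T - c • T‖ := by
  have huT' (x) : Commute (u x) (star T) := by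
    simpa [hu] using (huT (-x)).star_star
  have huu (x y) : Commute (u x) (u y) := by
    rw [commute_iff_eq, ← u.map_add_eq_mul, ← u.map_add_eq_mul, add_comm]
  obtain ⟨B, hB, φ, hφT, hφ⟩ := exists_starAlgHom_apply_ne_zero (s := insert T (Set.range u))
    (by
      rintro a (rfl | ⟨x, rfl⟩) b (rfl | ⟨y, rfl⟩)
      exacts [.refl _, (huT y).symm, huT x, huu x y])
    (by
      rintro a (rfl | ⟨x, rfl⟩) b (rfl | ⟨y, rfl⟩)
      exacts [(star_comm_self' _).symm, hu y ▸ (huT (-y)).symm, huT' x, hu y ▸ huu x (-y)])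
    (Set.mem_insert T _) hT
  have hT_mem : T ∈ B := hB (Set.mem_insert _ _)
  have hu_mem (x) : u x ∈ B := hB (Set.mem_insert_of_mem _ ⟨x, rfl⟩)
  let χ : AddChar G ℂ :=
    { toFun := fun x ↦ φ ⟨u x, hu_mem x⟩
      map_zero_eq_one' := by
        rw [← map_one φ]; exact congrArg φ (Subtype.ext u.map_zero_eq_one)
      map_add_eq_mul' := fun x y ↦ by
        rw [← map_mul]; exact congrArg φ (Subtype.ext (u.map_add_eq_mul x y)) }
  obtain ⟨ψ, hψ⟩ := exists_circle_addChar_coe_eq χ fun x ↦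
    (map_star φ _).symm.trans (congrArg φ (Subtype.ext (hu x)))
  refine ⟨ψ, ‖φ ⟨T, hT_mem⟩‖₊⁻¹, fun x c ↦ ?_⟩
  have hmul : (χ x - c) * φ ⟨T, hT_mem⟩ =
      φ (⟨u x, hu_mem x⟩ * ⟨T, hT_mem⟩ - c • ⟨T, hT_mem⟩) := by
    rw [map_sub, map_mul, map_smul, smul_eq_mul, sub_mul]
    rfl
  rw [hψ, NNReal.coe_inv, coe_nnnorm, ← div_eq_inv_mul, le_div_iff₀ (by positivity), ← norm_mul]
  exact (congrArg norm hmul).trans_le (hφ _)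

end CStarAlgebra

section ContractionRep

/-- A strongly continuous representation of the additive monoid `K` by contractions of `E`. -/
structure ContractionRep (K E : Type*) [AddMonoid K] [TopologicalSpace K]
    [NormedAddCommGroup E] [NormedSpace ℂ E] where
  /-- The operators of the representation. -/
  op : AddChar K (E →L[ℂ] E)
  norm_op_apply_le : ∀ x v, ‖op x v‖ ≤ ‖v‖
  continuous_op_apply : ∀ v, Continuous fun x ↦ op x v

/-- The translation representation `(τ_x a)(y) = a (y - x)` on continuous functions. -/
def translationRep (K : Type*) [AddCommGroup K] [TopologicalSpace K] [IsTopologicalAddGroup K]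
    [CompactSpace K] : ContractionRep K C(K, ℂ) where
  op :=
    { toFun := fun x ↦ (ContinuousMap.compStarAlgHom' ℂ ℂ
        ⟨fun y ↦ y - x, by fun_prop⟩ : C(K, ℂ) →⋆ₐ[ℂ] C(K, ℂ)).toAlgHom.toLinearMap.mkContinuous 1
          fun a ↦ by
            rw [one_mul]
            exact (ContinuousMap.norm_le _ (norm_nonneg a)).2 fun y ↦ a.norm_coe_le_norm _
      map_zero_eq_one' := by ext a y; simp
      map_add_eq_mul' := fun x₁ x₂ ↦ by ext a y; simp [sub_sub] }
  norm_op_apply_le x a := (ContinuousMap.norm_le _ (norm_nonneg a)).2 fun y ↦ a.norm_coe_le_norm _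
  continuous_op_apply a :=
    (ContinuousMap.curry ⟨fun p : K × K ↦ a (p.2 - p.1), by fun_prop⟩).continuous

theorem translationRep_apply {K : Type*} [AddCommGroup K] [TopologicalSpace K]
    [IsTopologicalAddGroup K] [CompactSpace K] (x : K) (a : C(K, ℂ)) (y : K) :
    (translationRep K).op x a y = a (y - x) := rfl

variable {K E : Type*} [AddCommGroup K] [TopologicalSpace K] [CompactSpace K]
  [MeasurableSpace K] [BorelSpace K] (μ : Measure K) [IsFiniteMeasure μ]
  [NormedAddCommGroup E] [NormedSpace ℂ E]

theorem ContractionRep.integrable_smul_op (ρ : ContractionRep K E) (a : C(K, ℂ)) (v : E) :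
    Integrable (fun x ↦ a x • ρ.op x v) μ :=
  (a.continuous.smul (ρ.continuous_op_apply v)).integrable_of_hasCompactSupport
    (.of_compactSpace _)

/-- The operator `∫ a(x) ρ(x) dμ(x)`, with `∫ a(x) ρ(x)v dμ(x)` as its value at `v`. -/
def ContractionRep.smear (ρ : ContractionRep K E) : C(K, ℂ) →L[ℂ] E →L[ℂ] E :=
  LinearMap.mkContinuous₂
    (LinearMap.mk₂ ℂ (fun a v ↦ ∫ x, a x • ρ.op x v ∂μ)
      (fun a b v ↦ by
        simp only [ContinuousMap.add_apply, add_smul]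
        exact integral_add (ρ.integrable_smul_op μ a v) (ρ.integrable_smul_op μ b v))
      (fun c a v ↦ by
        simp only [ContinuousMap.smul_apply, smul_assoc]
        exact integral_smul c _)
      (fun a v w ↦ by
        simp only [map_add, smul_add]
        exact integral_add (ρ.integrable_smul_op μ a v) (ρ.integrable_smul_op μ a w))
      (fun c a v ↦ by
        simp only [map_smul, smul_comm _ c]
        exact integral_smul c _))
    (μ.real Set.univ) fun a v ↦ by
      rw [mul_assoc, mul_comm]
      refine norm_integral_le_of_norm_le_const (.of_forall fun x ↦ ?_)
      rw [norm_smul]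
      gcongr
      exacts [a.norm_coe_le_norm x, ρ.norm_op_apply_le x v]

namespace ContractionRep

variable (ρ : ContractionRep K E) (a b : C(K, ℂ)) (x : K) (v : E)

theorem smear_apply : ρ.smear μ a v = ∫ y, a y • ρ.op y v ∂μ := rfl

variable [CompleteSpace E]

theorem map_smear {F : Type*} [NormedAddCommGroup F] [NormedSpace ℂ F] [CompleteSpace F]
    (σ : ContractionRep K F) (J : E →L[ℂ] F) (hJ : ∀ y w, J (ρ.op y w) = σ.op y (J w)) :
    J (ρ.smear μ a v) = σ.smear μ a (J v) := by
  rw [smear_apply, ← J.integral_comp_comm (ρ.integrable_smul_op μ a v), smear_apply]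
  simp only [map_smul, hJ]

theorem commute_smear {T : E →L[ℂ] E} (hT : ∀ y, Commute (ρ.op y) T) :
    Commute (ρ.smear μ a) T :=
  ContinuousLinearMap.ext fun v ↦
    (ρ.map_smear μ a v ρ T fun y w ↦ (DFunLike.congr_fun (hT y) w).symm).symm

theorem commute_op_smear : Commute (ρ.op x) (ρ.smear μ a) := by
  refine (ρ.commute_smear μ a fun y ↦ ?_).symm
  rw [commute_iff_eq, ← ρ.op.map_add_eq_mul, ← ρ.op.map_add_eq_mul, add_comm]

theorem smear_translate [IsTopologicalAddGroup K] [μ.IsAddLeftInvariant] :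
    ρ.smear μ ((translationRep K).op x a) = ρ.op x * ρ.smear μ a := by
  ext v
  rw [mul_apply_eq_comp, smear_apply, smear_apply,
    ← (ρ.op x).integral_comp_comm (ρ.integrable_smul_op μ a v), ← integral_add_left_eq_self _ x]
  simp [translationRep_apply, ρ.op.map_add_eq_mul]

end ContractionRep

theorem ContractionRep.star_op {K H : Type*} [AddCommGroup K] [TopologicalSpace K]
    [NormedAddCommGroup H] [InnerProductSpace ℂ H] [CompleteSpace H] (ρ : ContractionRep K H)
    (x : K) : star (ρ.op x) = ρ.op (-x) := by
  have hinv (y : K) (v : H) : ρ.op (-y) (ρ.op y v) = v := by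
    rw [← mul_apply_eq_comp, ← ρ.op.map_add_eq_mul, neg_add_cancel, ρ.op.map_zero_eq_one,
      one_apply_eq_self]
  have hnorm (v : H) : ‖ρ.op x v‖ = ‖v‖ := (ρ.norm_op_apply_le x v).antisymm <|
    (congrArg norm (hinv x v)).ge.trans (ρ.norm_op_apply_le (-x) _)
  refine ((ContinuousLinearMap.eq_adjoint_iff _ _).2 fun v w ↦ ?_).symm
  calc inner ℂ (ρ.op (-x) v) w
    _ = inner ℂ (ρ.op x (ρ.op (-x) v)) (ρ.op x w) :=
      ((LinearMap.norm_map_iff_inner_map_map (ρ.op x)).1 hnorm _ _).symm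
    _ = inner ℂ v (ρ.op x w) := by
      have := hinv (-x) v
      rw [neg_neg] at this
      rw [this]

section

variable {K : Type*} [AddCommGroup K] [TopologicalSpace K] [IsTopologicalAddGroup K]
  [CompactSpace K] [MeasurableSpace K] [BorelSpace K] (μ : Measure K) [IsFiniteMeasure μ]

theorem smear_translationRep_apply (a b : C(K, ℂ)) (x : K) :
    (translationRep K).smear μ a b x = ∫ y, a y * b (x - y) ∂μ := by
  rw [ContractionRep.smear_apply, ← ContinuousMap.evalCLM_apply ℂ,
    ← ContinuousLinearMap.integral_comp_comm _ ((translationRep K).integrable_smul_op μ a b)]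
  simp [translationRep_apply]

theorem ContractionRep.exists_addChar_norm_sub_le [μ.IsAddLeftInvariant] {H : Type*}
    [NormedAddCommGroup H] [InnerProductSpace ℂ H] [CompleteSpace H] (ρ : ContractionRep K H)
    {a : C(K, ℂ)} (ha : ρ.smear μ a ≠ 0) :
    ∃ ψ : AddChar K Circle, ∃ C : NNReal, ∀ x, ∀ c : ℂ,
      ‖(ψ x : ℂ) - c‖ ≤ C * ‖(translationRep K).op x a - c • a‖ := by
  have hcomm (x : K) : Commute (ρ.op x) (ρ.smear μ a) := ρ.commute_op_smear μ a x
  have : IsStarNormal (ρ.smear μ a) := ⟨(ρ.commute_smear μ a fun x ↦ by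
    simpa [ρ.star_op] using (hcomm (-x)).star_star).symm⟩
  obtain ⟨ψ, C, hψ⟩ := _root_.exists_addChar_norm_sub_le ρ.op ρ.star_op ha hcomm
  refine ⟨ψ, C * ‖ρ.smear μ‖₊, fun x c ↦ (hψ x c).trans ?_⟩
  rw [← ρ.smear_translate μ, ← map_smul, ← map_sub, NNReal.coe_mul, coe_nnnorm, mul_assoc]
  gcongr
  exact (ρ.smear μ).le_opNorm _

theorem norm_translate_smear_sub_le_left [μ.IsAddLeftInvariant] (a b : C(K, ℂ)) (x : K) (c : ℂ) :
    ‖(translationRep K).op x ((translationRep K).smear μ a b) - c • (translationRep K).smear μ a b‖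
      ≤ ‖(translationRep K).smear μ‖ * ‖(translationRep K).op x a - c • a‖ * ‖b‖ := by
  have h : (translationRep K).op x ((translationRep K).smear μ a b)
      - c • (translationRep K).smear μ a b
      = (translationRep K).smear μ ((translationRep K).op x a - c • a) b := by
    simp [map_sub, ContractionRep.smear_translate]
  exact h ▸ ((translationRep K).smear μ).le_opNorm₂ _ b

theorem norm_translate_smear_sub_le_right (a b : C(K, ℂ)) (x : K) (c : ℂ) :
    ‖(translationRep K).op x ((translationRep K).smear μ a b) - c • (translationRep K).smear μ a b‖
      ≤ ‖(translationRep K).smear μ‖ * ‖a‖ * ‖(translationRep K).op x b - c • b‖ := by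
  have h : (translationRep K).op x ((translationRep K).smear μ a b)
      - c • (translationRep K).smear μ a b
      = (translationRep K).smear μ a ((translationRep K).op x b - c • b) := by
    rw [map_sub, map_smul, ← mul_apply_eq_comp, (translationRep K).commute_op_smear μ a x,
      mul_apply_eq_comp]
  exact h ▸ ((translationRep K).smear μ).le_opNorm₂ a _

variable [R1Space K] [μ.IsAddLeftInvariant] [μ.InnerRegularCompactLTTop]

/-- The regular representation of `K` on `L²(μ)`. -/
def regularRep : ContractionRep K (Lp ℂ 2 μ) where
  op :=
    { toFun := fun x ↦
        (Lp.compMeasurePreservingₗᵢ ℂ _ (measurePreserving_sub_right μ x)).toContinuousLinearMap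
      map_zero_eq_one' := by
        ext1 f
        obtain ⟨g, hg, rfl⟩ : ∃ g, ∃ hg : MemLp g 2 μ, hg.toLp g = f :=
          ⟨f, Lp.memLp f, Lp.toLp_coeFn f _⟩
        exact MemLp.toLp_congr (hg.comp_measurePreserving (measurePreserving_sub_right μ 0)) hg
          (.of_forall fun y ↦ congrArg g (sub_zero y))
      map_add_eq_mul' := fun x₁ x₂ ↦ by
        ext1 f
        obtain ⟨g, hg, rfl⟩ : ∃ g, ∃ hg : MemLp g 2 μ, hg.toLp g = f :=
          ⟨f, Lp.memLp f, Lp.toLp_coeFn f _⟩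
        exact MemLp.toLp_congr
          (hg.comp_measurePreserving (measurePreserving_sub_right μ (x₁ + x₂)))
          ((hg.comp_measurePreserving (measurePreserving_sub_right μ x₂)).comp_measurePreserving
            (measurePreserving_sub_right μ x₁))
          (.of_forall fun y ↦ congrArg g (sub_sub y x₁ x₂).symm) }
  norm_op_apply_le x f := (LinearIsometry.norm_map _ f).le
  continuous_op_apply f := continuous_const.compMeasurePreservingLp (μ := μ)
    (g := fun x ↦ ⟨fun y ↦ y - x, by fun_prop⟩)
    (ContinuousMap.curry ⟨fun p : K × K ↦ p.2 - p.1, by fun_prop⟩).continuous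
    (measurePreserving_sub_right μ) (by simp)

theorem regularRep_toLp (x : K) (a : C(K, ℂ)) :
    ContinuousMap.toLp 2 μ ℂ ((translationRep K).op x a) =
      (regularRep μ).op x (ContinuousMap.toLp 2 μ ℂ a) :=
  rfl

variable [μ.IsOpenPosMeasure]

theorem smear_regularRep_ne_zero {a : C(K, ℂ)} (ha : a ≠ 0) : (regularRep μ).smear μ a ≠ 0 := by
  obtain ⟨y, hy⟩ : ∃ y, a y ≠ 0 := by simpa [DFunLike.ext_iff] using ha
  let f : C(K, ℂ) := ⟨fun x ↦ star (a (-x)), by fun_prop⟩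
  have hpos : 0 < ∫ x, ‖a x‖ ^ 2 ∂μ :=
    Continuous.integral_pos_of_hasCompactSupport_nonneg_nonzero (x := y) (by fun_prop)
      (.of_compactSpace _) (fun x ↦ sq_nonneg ‖a x‖) (by simpa)
  have hval : (translationRep K).smear μ a f 0 = ∫ x, ‖a x‖ ^ 2 ∂μ := by
    rw [smear_translationRep_apply, ← integral_complex_ofReal]
    refine integral_congr_ae (.of_forall fun x ↦ ?_)
    simp [f, Complex.mul_conj, Complex.normSq_eq_norm_sq]
  intro h
  have : ContinuousMap.toLp 2 μ ℂ ((translationRep K).smear μ a f) = 0 := by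
    rw [(translationRep K).map_smear μ a f (regularRep μ) _ (regularRep_toLp μ), h]
    rfl
  rw [(injective_iff_map_eq_zero _).1 (ContinuousMap.toLp_injective μ) _ this] at hval
  exact hpos.ne (Complex.ofReal_eq_zero.1 hval.symm).symm

theorem exists_addChar_norm_sub_le_of_integral_ne_zero {a b : C(K, ℂ)}
    (hab : ∫ x, a x * b (-x) ∂μ ≠ 0) :
    ∃ ψ : AddChar K Circle, ∃ C : NNReal, ∀ x, ∀ c : ℂ,
      ‖(ψ x : ℂ) - c‖ ≤ C * ‖(translationRep K).op x a - c • a‖ ∧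
      ‖(ψ x : ℂ) - c‖ ≤ C * ‖(translationRep K).op x b - c • b‖ := by
  let τ := translationRep K
  have hconv : τ.smear μ a b ≠ 0 := by
    refine fun h ↦ hab ?_
    have := smear_translationRep_apply μ a b 0
    simpa [h, τ] using this.symm
  obtain ⟨ψ, C, hψ⟩ :=
    (regularRep μ).exists_addChar_norm_sub_le μ (smear_regularRep_ne_zero μ hconv)
  refine ⟨ψ, C * (‖τ.smear μ‖₊ * (‖a‖₊ + ‖b‖₊)), fun x c ↦ ?_⟩
  refine ⟨(hψ x c).trans ?_, (hψ x c).trans ?_⟩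
  · calc (C : ℝ) * ‖τ.op x (τ.smear μ a b) - c • τ.smear μ a b‖
      _ ≤ C * (‖τ.smear μ‖ * ‖τ.op x a - c • a‖ * ‖b‖) := by
        gcongr; exact norm_translate_smear_sub_le_left μ a b x c
      _ = C * (‖τ.smear μ‖ * ‖b‖) * ‖τ.op x a - c • a‖ := by ring
      _ ≤ C * (‖τ.smear μ‖ * (‖a‖ + ‖b‖)) * ‖τ.op x a - c • a‖ := by
        gcongr; exact le_add_of_nonneg_left (norm_nonneg a)
  · calc (C : ℝ) * ‖τ.op x (τ.smear μ a b) - c • τ.smear μ a b‖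
      _ ≤ C * (‖τ.smear μ‖ * ‖a‖ * ‖τ.op x b - c • b‖) := by
        gcongr; exact norm_translate_smear_sub_le_right μ a b x c
      _ = C * (‖τ.smear μ‖ * ‖a‖) * ‖τ.op x b - c • b‖ := by ring
      _ ≤ C * (‖τ.smear μ‖ * (‖a‖ + ‖b‖)) * ‖τ.op x b - c • b‖ := by
        gcongr; exact le_add_of_nonneg_right (norm_nonneg b)

end

end ContractionRep

section TotallyBounded

theorem compactSpace_completion_of_totallyBounded {G : Type*} [UniformSpace G]
    (hG : TotallyBounded (Set.univ : Set G)) : CompactSpace (UniformSpace.Completion G) := by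
  have h := (hG.image (UniformSpace.Completion.uniformContinuous_coe G)).closure
  rw [Set.image_univ, UniformSpace.Completion.denseRange_coe.closure_range] at h
  exact ⟨h.isCompact_of_isClosed isClosed_univ⟩

theorem integral_ne_zero_of_denseRange_re_nonneg {K : Type*} [TopologicalSpace K] [CompactSpace K]
    [MeasurableSpace K] [BorelSpace K] (μ : Measure K) [IsFiniteMeasure μ] [μ.IsOpenPosMeasure]
    {f : K → ℂ} (hf : Continuous f) {ι : Type*} {i : ι → K} (hi : DenseRange i)
    (hfi : ∀ j, 0 ≤ (f (i j)).re) {x : K} (hx : (f x).re ≠ 0) : ∫ x, f x ∂μ ≠ 0 := by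
  intro h
  have hre (x : K) : 0 ≤ (f x).re :=
    hi.induction_on x (isClosed_le continuous_const (Complex.continuous_re.comp hf)) hfi
  have hpos : 0 < ∫ x, (f x).re ∂μ :=
    (Complex.continuous_re.comp hf).integral_pos_of_hasCompactSupport_nonneg_nonzero
      (.of_compactSpace _) hre hx
  have hint := integral_re (hf.integrable_of_hasCompactSupport (μ := μ) (.of_compactSpace _))
  rw [h] at hint
  exact hpos.ne' hint

variable {G : Type*} [SeminormedAddCommGroup G]

theorem norm_translationRep_sub_smul_le [CompactSpace (UniformSpace.Completion G)]
    {a : C(UniformSpace.Completion G, ℂ)} {x : G} {c : ℂ} {B : ℝ}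
    (h : ∀ y : G, ‖a ↑(y - x) - c * a y‖ ≤ B) :
    ‖(translationRep (UniformSpace.Completion G)).op x a - c • a‖ ≤ B := by
  refine (ContinuousMap.norm_le _ ((norm_nonneg _).trans (h 0))).2 fun y ↦ ?_
  induction y using UniformSpace.Completion.induction_on with
  | hp => exact isClosed_le (by fun_prop) continuous_const
  | ih y =>
    rw [ContinuousMap.sub_apply, translationRep_apply, ← UniformSpace.Completion.coe_sub]
    exact h y

theorem exists_addChar_norm_sub_le_of_totallyBounded (hG : TotallyBounded (Set.univ : Set G))
    {f₁ f₂ : G → ℂ} (hf₁ : UniformContinuous f₁) (hf₂ : UniformContinuous f₂)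
    (hre : ∀ x, 0 ≤ (f₁ x * f₂ x).re) (h0 : (f₁ 0 * f₂ 0).re ≠ 0) :
    ∃ ψ : AddChar G Circle, ∃ C : NNReal, ∀ x, ∀ c : ℂ, ∀ B : ℝ,
      ((∀ y, ‖f₁ (y - x) - c * f₁ y‖ ≤ B) → ‖(ψ x : ℂ) - c‖ ≤ C * B) ∧
      ((∀ y, ‖f₂ (y + x) - c * f₂ y‖ ≤ B) → ‖(ψ x : ℂ) - c‖ ≤ C * B) := by
  let K := UniformSpace.Completion G
  have : CompactSpace K := compactSpace_completion_of_totallyBounded hG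
  let : MeasurableSpace K := borel K
  have : BorelSpace K := ⟨rfl⟩
  let a : C(K, ℂ) :=
    ⟨UniformSpace.Completion.extension f₁, UniformSpace.Completion.continuous_extension⟩
  let b : C(K, ℂ) := ⟨fun x ↦ UniformSpace.Completion.extension f₂ (-x),
    UniformSpace.Completion.continuous_extension.comp continuous_neg⟩
  have ha (x : G) : a x = f₁ x := UniformSpace.Completion.extension_coe hf₁ x
  have hb (x : G) : b ↑(-x) = f₂ x := by
    change UniformSpace.Completion.extension f₂ (-↑(-x)) = f₂ x
    rw [← UniformSpace.Completion.coe_neg, neg_neg, UniformSpace.Completion.extension_coe hf₂]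
  have hab (x : G) : a x * b (-x) = f₁ x * f₂ x := by
    rw [← UniformSpace.Completion.coe_neg, ha, hb]
  have hcont : Continuous fun x ↦ a x * b (-x) := by fun_prop
  have hint : ∫ x, a x * b (-x) ∂(Measure.addHaar : Measure K) ≠ 0 :=
    integral_ne_zero_of_denseRange_re_nonneg _ hcont UniformSpace.Completion.denseRange_coe
      (fun x ↦ (hre x).trans_eq (congrArg Complex.re (hab x).symm))
      ((congrArg Complex.re (hab 0)).trans_ne h0)
  obtain ⟨ψ, C, hψ⟩ := exists_addChar_norm_sub_le_of_integral_ne_zero Measure.addHaar hint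
  refine ⟨ψ.compAddMonoidHom UniformSpace.Completion.toCompl, C, fun x c B ↦
    ⟨fun h ↦ (hψ x c).1.trans ?_, fun h ↦ (hψ x c).2.trans ?_⟩⟩
  · gcongr
    exact norm_translationRep_sub_smul_le fun y ↦ by simpa only [ha] using h y
  · gcongr
    refine norm_translationRep_sub_smul_le fun y ↦ ?_
    rw [← neg_neg (y - x), ← neg_neg y, hb, hb]
    simpa [sub_eq_add_neg, add_comm] using h (-y)

end TotallyBounded

section AddGroupSeminorm

variable {G : Type*} [AddCommGroup G]

/-- The tent function of height `1` supported on the ball of radius `r` of a seminorm. -/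
def tent (N : AddGroupSeminorm G) (r : ℝ) (x : G) : ℝ := max (1 - N x / r) 0

variable (N : AddGroupSeminorm G) {r : ℝ} (hr : 0 < r)

theorem tent_nonneg (x : G) : 0 ≤ tent N r x := le_max_right _ _

theorem tent_zero : tent N r 0 = 1 := by simp [tent]

include hr

theorem tent_le_one (x : G) : tent N r x ≤ 1 :=
  max_le (sub_le_self _ (div_nonneg (apply_nonneg N x) hr.le)) zero_le_one

theorem tent_eq_zero {x : G} (hx : r ≤ N x) : tent N r x = 0 :=
  max_eq_right (sub_nonpos.2 ((one_le_div hr).2 hx))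

theorem abs_tent_sub_tent_le (x y : G) : |tent N r x - tent N r y| ≤ N (x - y) / r := by
  calc |tent N r x - tent N r y|
    _ ≤ |(1 - N x / r) - (1 - N y / r)| := abs_max_sub_max_le_abs _ _ _
    _ = |N y - N x| / r := by rw [sub_sub_sub_cancel_left, ← sub_div, abs_div, abs_of_pos hr]
    _ ≤ N (x - y) / r := by
      rw [map_sub_rev N x y]
      gcongr
      exact abs_sub_map_le_sub N y x

end AddGroupSeminorm

section Duality

theorem totallyBounded_univ_of_isSyndetic {G : Type*} [SeminormedAddCommGroup G]
    (h : ∀ ε > 0, IsSyndetic {x : G | ‖x‖ < ε}) :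
    TotallyBounded (Set.univ : Set G) := by
  refine Metric.totallyBounded_iff.2 fun ε hε ↦ ?_
  obtain ⟨t, ht, hcover⟩ := h ε hε
  refine ⟨t, ht, hcover.symm.subset.trans ?_⟩
  rintro _ ⟨y, hy, x, hx, rfl⟩
  exact Set.mem_biUnion hy (by simpa [mem_ball_iff_norm] using hx)

theorem uniformContinuous_of_norm_add_sub_le {G E : Type*} [SeminormedAddCommGroup G]
    [SeminormedAddCommGroup E] {f : G → E} {ω : G → ℝ} (hω : Tendsto ω (𝓝 0) (𝓝 0))
    (h : ∀ x s, ‖f (x + s) - f x‖ ≤ ω s) : UniformContinuous f := by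
  refine Metric.uniformContinuous_iff.2 fun ε hε ↦ ?_
  obtain ⟨δ, hδ, hball⟩ := Metric.eventually_nhds_iff.1 (hω.eventually_lt_const hε)
  refine ⟨δ, hδ, fun {x y} hxy ↦ ?_⟩
  rw [dist_eq_norm, ← add_sub_cancel y x]
  exact (h y (x - y)).trans_lt (hball (by simpa [dist_eq_norm] using hxy))

theorem circle_re_nonneg_of_dist_one_lt_one {z : Circle} (hz : dist z 1 < 1) : 0 ≤ (z : ℂ).re := by
  have h := (Complex.abs_re_le_norm _).trans_lt
    (show ‖(z : ℂ) - 1‖ < 1 by rwa [← dist_eq_norm])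
  rw [Complex.sub_re, Complex.one_re, abs_lt] at h
  linarith

/-- The tent function modulated by a character `e`; it nearly transforms by `e` under translations
that are small for the seminorm. -/
def charTent {G : Type*} [AddCommGroup G] (N : AddGroupSeminorm G) (r : ℝ) (e : AddChar G Circle)
    (x : G) : ℂ := tent N r x * e x

theorem norm_charTent_add_sub_le {G : Type*} [AddCommGroup G] (N : AddGroupSeminorm G) {r : ℝ}
    (hr : 0 < r) (e : AddChar G Circle) (x s : G) :
    ‖charTent N r e (x + s) - e s * charTent N r e x‖ ≤ N s / r := by
  calc ‖charTent N r e (x + s) - e s * charTent N r e x‖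
    _ = ‖((tent N r (x + s) - tent N r x : ℝ) : ℂ) * (e x * e s : ℂ)‖ := by
      simp only [charTent, e.map_add_eq_mul, Circle.coe_mul, Complex.ofReal_sub]
      ring_nf
    _ = |tent N r (x + s) - tent N r x| := by
      rw [norm_mul, norm_mul, Circle.norm_coe, Circle.norm_coe, Complex.norm_real, mul_one,
        mul_one, Real.norm_eq_abs]
    _ ≤ N s / r := by simpa using abs_tent_sub_tent_le N hr (x + s) x

theorem norm_charTent_le_one {G : Type*} [AddCommGroup G] (N : AddGroupSeminorm G) {r : ℝ}
    (hr : 0 < r) (e : AddChar G Circle) (x : G) : ‖charTent N r e x‖ ≤ 1 := by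
  rw [charTent, norm_mul, Circle.norm_coe, mul_one, Complex.norm_real, Real.norm_eq_abs,
    abs_of_nonneg (tent_nonneg N x)]
  exact tent_le_one N hr x

theorem uniformContinuous_charTent {G : Type*} [SeminormedAddCommGroup G]
    {N : AddGroupSeminorm G} (hN : ∀ x, N x ≤ ‖x‖) {r : ℝ} (hr : 0 < r) {e : AddChar G Circle}
    (he : Tendsto e (𝓝 0) (𝓝 1)) : UniformContinuous (charTent N r e) := by
  have hnorm : Tendsto (fun s : G ↦ ‖s‖ / r) (𝓝 0) (𝓝 0) :=
    (continuous_norm.div_const _).tendsto' 0 0 (by simp)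
  refine uniformContinuous_of_norm_add_sub_le
    (by simpa using hnorm.add (tendsto_iff_dist_tendsto_zero.1 he)) fun x s ↦ ?_
  calc ‖charTent N r e (x + s) - charTent N r e x‖
    _ = ‖(charTent N r e (x + s) - e s * charTent N r e x)
          + ((e s : ℂ) - 1) * charTent N r e x‖ := by ring_nf
    _ ≤ N s / r + ‖(e s : ℂ) - 1‖ * ‖charTent N r e x‖ := by
      rw [← norm_mul]
      exact norm_add_le_of_le (norm_charTent_add_sub_le N hr e x s) le_rfl
    _ ≤ ‖s‖ / r + ‖(e s : ℂ) - 1‖ := by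
      gcongr
      · exact hN s
      · exact mul_le_of_le_one_right (norm_nonneg _) (norm_charTent_le_one N hr e x)
    _ = ‖s‖ / r + dist (e s) 1 := by rw [← dist_eq_norm]; rfl

theorem exists_addChar_dist_le {G : Type*} [AddCommGroup G] (N₁ N₂ : AddGroupSeminorm G)
    (hsynd : ∀ ε > 0, IsSyndetic {x | N₁ x + N₂ x < ε})
    (e : AddChar G Circle)
    (he : ∀ ε > 0, ∃ δ > 0, ∀ x, N₁ x + N₂ x < δ → dist (e x) 1 < ε) :
    ∃ ψ : AddChar G Circle, ∃ C : NNReal, ∀ x,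
      dist (ψ x) 1 ≤ C * N₁ x ∧ dist (ψ x) (e x) ≤ C * N₂ x := by
  let : SeminormedAddCommGroup G := (N₁ + N₂).toSeminormedAddCommGroup
  have hN₁ (x : G) : N₁ x ≤ ‖x‖ := le_add_of_nonneg_right (apply_nonneg N₂ x)
  have hN₂ (x : G) : N₂ x ≤ ‖x‖ := le_add_of_nonneg_left (apply_nonneg N₁ x)
  have hcont : Tendsto e (𝓝 0) (𝓝 1) := Metric.tendsto_nhds_nhds.2 fun ε hε ↦
    (he ε hε).imp fun _ h ↦ ⟨h.1, fun x hx ↦ h.2 x (by rwa [dist_zero_right] at hx)⟩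
  obtain ⟨δ, hδ, heδ⟩ := he 1 one_pos
  let r : ℝ := δ / 2
  have hr : 0 < r := half_pos hδ
  have hre (x : G) : 0 ≤ (charTent N₁ r 1 x * charTent N₂ r e x).re := by
    rcases le_or_gt r (N₁ x) with h₁ | h₁
    · simp [charTent, tent_eq_zero N₁ hr h₁]
    rcases le_or_gt r (N₂ x) with h₂ | h₂
    · simp [charTent, tent_eq_zero N₂ hr h₂]
    have hex : 0 ≤ (e x : ℂ).re :=
      circle_re_nonneg_of_dist_one_lt_one (heδ x ((add_lt_add h₁ h₂).trans_eq (add_halves δ)))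
    simpa [charTent] using
      mul_nonneg (tent_nonneg N₁ x) (mul_nonneg (tent_nonneg N₂ x) hex)
  obtain ⟨ψ, C, hψ⟩ := exists_addChar_norm_sub_le_of_totallyBounded
    (totallyBounded_univ_of_isSyndetic hsynd) (uniformContinuous_charTent hN₁ hr tendsto_const_nhds)
    (uniformContinuous_charTent hN₂ hr hcont) hre (by simp [charTent, tent_zero])
  refine ⟨ψ, C / r.toNNReal, fun x ↦ ?_⟩
  simp only [NNReal.coe_div, Real.coe_toNNReal _ hr.le, div_mul_eq_mul_div, mul_div_assoc]
  refine ⟨(dist_eq_norm (ψ x : ℂ) 1).trans_le ((hψ x 1 _).1 fun y ↦ ?_),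
    (dist_eq_norm (ψ x : ℂ) (e x)).trans_le ((hψ x (e x) _).2 fun y ↦ ?_)⟩
  · simpa [sub_eq_add_neg] using norm_charTent_add_sub_le N₁ hr 1 y (-x)
  · exact norm_charTent_add_sub_le N₂ hr e y x

theorem exists_eq_circleExp_mul {ψ : AddChar ℝ Circle} (hψ : Continuous ψ) :
    ∃ c : ℝ, ∀ x, ψ x = Circle.exp (c * x) := by
  obtain ⟨L, ⟨hL0, hL⟩, -⟩ := Circle.isCoveringMap_exp.existsUnique_continuousMap_lifts
    ⟨ψ, hψ⟩ 0 0 (by simp)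
  have hLψ (x : ℝ) : Circle.exp (L x) = ψ x := congrFun hL x
  have hadd (x y : ℝ) : L (x + y) = L x + L y := by
    refine congrFun (Circle.isCoveringMap_exp.eq_of_comp_eq (g₁ := fun x ↦ L (x + y))
      (g₂ := fun x ↦ L x + L y) (by fun_prop) (by fun_prop) (funext fun x ↦ ?_) 0 (by simp [hL0])) x
    simp [Circle.exp_add, hLψ, ψ.map_add_eq_mul]
  refine ⟨L 1, fun x ↦ ?_⟩
  have hsmul := map_real_smul (AddMonoidHom.mk' L hadd) L.continuous x 1
  rw [smul_eq_mul, mul_one, smul_eq_mul, mul_comm] at hsmul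
  exact (hLψ x).symm.trans (congrArg _ hsmul)

end Duality

section WeylSeminorm

variable {α β : Type*} [PseudoEMetricSpace α] [PseudoEMetricSpace β] {w : ℝ → α} {v : ℝ → β}
  {φ ψ : ℝ → ℝ≥0∞} {l : ℝ}

/-- The limit of the suprema of the averages of `φ` over windows of length `L`, as `L → ∞`. -/
def upperMean (φ : ℝ → ℝ≥0∞) : ℝ≥0∞ := limsup (fun L ↦ supMean L φ) atTop

theorem upperMean_le_of_eventually_le {ε : ℝ≥0∞} (h : ∀ᶠ L in atTop, supMean L φ ≤ ε) :
    upperMean φ ≤ ε :=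
  limsup_le_of_le (by isBoundedDefault) h

theorem upperMean_le_two_mul (hl : 0 < l) : upperMean φ ≤ 2 * supMean l φ :=
  upperMean_le_of_eventually_le (eventually_supMean_le_two_mul hl φ)

theorem exists_supMean_lt_of_upperMean_lt {ε : ℝ≥0∞} (h : upperMean φ < ε) :
    ∃ l > 0, supMean l φ < ε :=
  ((eventually_gt_atTop 0).and (eventually_lt_of_limsup_lt h)).exists

theorem upperMean_mono (h : φ ≤ ψ) : upperMean φ ≤ upperMean ψ :=
  limsup_le_limsup (.of_forall fun _ ↦ supMean_mono h)

theorem upperMean_le_add {χ : ℝ → ℝ≥0∞} (h : ∀ L, supMean L χ ≤ supMean L φ + supMean L ψ) :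
    upperMean χ ≤ upperMean φ + upperMean ψ := by
  refine ENNReal.le_of_forall_pos_le_add fun ε hε hfin ↦ ?_
  have hε₂ : (ε / 2 : ℝ≥0∞) ≠ 0 := by simpa using hε.ne'
  obtain ⟨hφ, hψ⟩ := ENNReal.add_lt_top.1 hfin
  have hφ' := eventually_lt_of_limsup_lt (ENNReal.lt_add_right hφ.ne hε₂)
  have hψ' := eventually_lt_of_limsup_lt (ENNReal.lt_add_right hψ.ne hε₂)
  refine upperMean_le_of_eventually_le ?_
  filter_upwards [hφ', hψ'] with L hLφ hLψ
  calc supMean L χ ≤ upperMean φ + ε / 2 + (upperMean ψ + ε / 2) :=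
        (h L).trans (add_le_add hLφ.le hLψ.le)
    _ = upperMean φ + upperMean ψ + ε := by rw [add_add_add_comm, ENNReal.add_halves]

theorem upperMean_transCost_ne_top (w : ℝ → α) (τ : ℝ) : upperMean (transCost w τ) ≠ ∞ :=
  ne_top_of_le_ne_top ENNReal.one_ne_top <| upperMean_le_of_eventually_le <|
    (eventually_gt_atTop 0).mono fun _ hL ↦ supMean_transCost_le_one hL w τ

/-- The Weyl distance between `w` and its translate by `τ`, as a seminorm in `τ`. -/
def weylSeminorm (hw : AEStronglyMeasurable w) : AddGroupSeminorm ℝ where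
  toFun τ := (upperMean (transCost w τ)).toReal
  map_zero' := by simp [upperMean, supMean_transCost_zero]
  neg' τ := by simp [upperMean, supMean_transCost_neg]
  add_le' σ τ := by
    have hσ := upperMean_transCost_ne_top w σ
    have hτ := upperMean_transCost_ne_top w τ
    rw [← ENNReal.toReal_add hσ hτ]
    refine ENNReal.toReal_mono (ENNReal.add_ne_top.2 ⟨hσ, hτ⟩) ?_
    exact upperMean_le_add fun L ↦ supMean_transCost_add_le hw L σ τ

theorem tendsto_weylSeminorm_zero_iff {ι : Type*} {f : Filter ι} {τ : ι → ℝ}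
    (hw : AEStronglyMeasurable w) : Tendsto (fun i ↦ weylSeminorm hw (τ i)) f (𝓝 0) ↔
      Tendsto (fun i ↦ upperMean (transCost w (τ i))) f (𝓝 0) :=
  ENNReal.tendsto_toReal_iff (fun i ↦ upperMean_transCost_ne_top w (τ i)) ENNReal.zero_ne_top

theorem TransDominated.tendsto_weylSeminorm (h : TransDominated v w) (hw : AEStronglyMeasurable w) :
    Tendsto (weylSeminorm h.aestronglyMeasurable) (comap (weylSeminorm hw) (𝓝 0)) (𝓝 0) := by
  refine (tendsto_weylSeminorm_zero_iff _).2 (ENNReal.tendsto_nhds_zero.2 fun ε hε ↦ ?_)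
  obtain ⟨δ, hδ, hctrl⟩ := h.controls ε hε
  filter_upwards [((tendsto_weylSeminorm_zero_iff hw).1 tendsto_comap).eventually_lt_const hδ]
    with τ hτ
  obtain ⟨l, hl, hlτ⟩ := exists_supMean_lt_of_upperMean_lt hτ
  exact upperMean_le_of_eventually_le ((hctrl l hl).mono fun L hL ↦ hL τ hlτ.le)

theorem weylSeminorm_le_of_transCost_le {τ : ℝ} (hv : AEStronglyMeasurable v)
    (hw : AEStronglyMeasurable w) (h : transCost v τ ≤ transCost w τ) :
    weylSeminorm hv τ ≤ weylSeminorm hw τ :=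
  ENNReal.toReal_mono (upperMean_transCost_ne_top w τ) (upperMean_mono h)

theorem weylSeminorm_prodMk_le (hv : AEStronglyMeasurable v) (hw : AEStronglyMeasurable w) (τ : ℝ) :
    weylSeminorm (hv.prodMk hw) τ ≤ (weylSeminorm hv + weylSeminorm hw) τ := by
  have hvτ := upperMean_transCost_ne_top v τ
  have hwτ := upperMean_transCost_ne_top w τ
  refine (ENNReal.toReal_mono (ENNReal.add_ne_top.2 ⟨hvτ, hwτ⟩) ?_).trans
    (ENNReal.toReal_add hvτ hwτ).le
  exact upperMean_le_add fun L ↦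
    (supMean_mono fun t ↦ truncEDist_prod_le (v t, w t) (v (t + τ), w (t + τ))).trans
      (supMean_add_le (aemeasurable_transCost hv τ))

theorem IsWeylAP.tendsto_weylSeminorm_zero (hw : IsWeylAP w) :
    Tendsto (weylSeminorm hw.aestronglyMeasurable) (𝓝 0) (𝓝 0) := by
  refine (tendsto_weylSeminorm_zero_iff _).2 (ENNReal.tendsto_nhds_zero.2 fun ε hε ↦ ?_)
  obtain ⟨l, hl, r, hr, h⟩ := hw.exists_supMean_transCost_le (ENNReal.half_pos hε.ne')
  filter_upwards [Metric.closedBall_mem_nhds (0 : ℝ) hr] with τ hτ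
  grw [upperMean_le_two_mul hl, h τ (by simpa using hτ),
    ENNReal.mul_div_cancel two_ne_zero ENNReal.ofNat_ne_top]

theorem IsWeylAP.isSyndetic_weylSeminorm_lt (hw : IsWeylAP w) {ε : ℝ} (hε : 0 < ε) :
    IsSyndetic {τ | weylSeminorm hw.aestronglyMeasurable τ < ε} := by
  have hε₄ : 0 < ENNReal.ofReal (ε / 4) := ENNReal.ofReal_pos.2 (by positivity)
  obtain ⟨l, hl, hsynd⟩ := hw.isSyndetic hε₄
  refine (hsynd l le_rfl).mono fun τ hτ ↦ ENNReal.toReal_lt_of_lt_ofReal ?_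
  calc upperMean (transCost w τ) ≤ 2 * supMean l (transCost w τ) := upperMean_le_two_mul hl
    _ ≤ 2 * ENNReal.ofReal (ε / 4) := by gcongr; exact hτ
    _ = ENNReal.ofReal (ε / 2) := by
        rw [← ENNReal.ofReal_ofNat, ← ENNReal.ofReal_mul zero_le_two]; ring_nf
    _ < ENNReal.ofReal ε := (ENNReal.ofReal_lt_ofReal_iff hε).2 (half_lt_self hε)

end WeylSeminorm

section ReturnModule

variable {N N₁ N₂ : AddGroupSeminorm ℝ}

/-- The frequencies of the characters of `ℝ` that are continuous for the seminorm `N`. -/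
def returnModule (N : AddGroupSeminorm ℝ) : Set ℝ :=
  {c | Tendsto (fun x ↦ Circle.exp (c * x)) (comap N (𝓝 0)) (𝓝 1)}

theorem returnModule_mono (h : Tendsto N₁ (comap N₂ (𝓝 0)) (𝓝 0)) :
    returnModule N₁ ⊆ returnModule N₂ := fun _ hc ↦ hc.mono_left h.le_comap

theorem mem_returnModule_of_dist_le {c : ℝ} {C : NNReal}
    (h : ∀ x, dist (Circle.exp (c * x)) 1 ≤ C * N x) : c ∈ returnModule N := by
  refine tendsto_iff_dist_tendsto_zero.2 (squeeze_zero (fun _ ↦ dist_nonneg) h ?_)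
  simpa using (tendsto_comap (f := N) (x := 𝓝 0)).const_mul (C : ℝ)

/-- The additive character `x ↦ exp (i c x)` of `ℝ`. -/
def expAddChar (c : ℝ) : AddChar ℝ Circle where
  toFun x := Circle.exp (c * x)
  map_zero_eq_one' := by simp
  map_add_eq_mul' x y := by simp [mul_add, Circle.exp_add]

theorem exists_forall_dist_expAddChar_lt {c : ℝ} (hc : c ∈ returnModule N) {ε : ℝ} (hε : 0 < ε) :
    ∃ δ > 0, ∀ x, N x < δ → dist (expAddChar c x) 1 < ε := by
  obtain ⟨δ, hδ, h⟩ :=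
    ((Metric.nhds_basis_ball.comap N).tendsto_iff Metric.nhds_basis_ball).1 hc ε hε
  refine ⟨δ, hδ, fun x hx ↦ h x ?_⟩
  simpa [abs_of_nonneg (apply_nonneg N x)] using hx

theorem circle_dist_div_one (z w : Circle) : dist (z / w) 1 = dist z w := by
  calc dist (z / w) 1 = ‖((z / w : Circle) : ℂ) - 1‖ := dist_eq_norm ((z / w : Circle) : ℂ) 1
    _ = ‖(z - w : ℂ)‖ := by
        rw [Circle.coe_div, div_sub_one w.coe_ne_zero, norm_div, Circle.norm_coe, div_one]
    _ = dist z w := (dist_eq_norm (z : ℂ) w).symm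

theorem continuous_addChar_of_dist_le {ψ : AddChar ℝ Circle} (hN : Tendsto N (𝓝 0) (𝓝 0))
    {C : NNReal} (h : ∀ x, dist (ψ x) 1 ≤ C * N x) : Continuous ψ := by
  refine continuous_iff_continuousAt.2 fun x ↦ tendsto_iff_dist_tendsto_zero.2 ?_
  have hlim : Tendsto (fun y ↦ C * N (y - x)) (𝓝 x) (𝓝 0) := by
    simpa using (hN.comp (tendsto_sub_nhds_zero_iff.2 tendsto_id)).const_mul (C : ℝ)
  refine squeeze_zero (fun _ ↦ dist_nonneg) (fun y ↦ ?_) hlim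
  rw [← circle_dist_div_one, ← ψ.map_sub_eq_div]
  exact h (y - x)

theorem returnModule_add_subset (hsynd : ∀ ε > 0, IsSyndetic {x | (N₁ + N₂) x < ε})
    (hN₁ : Tendsto N₁ (𝓝 0) (𝓝 0)) :
    returnModule (N₁ + N₂) ⊆ returnModule N₁ + returnModule N₂ := by
  intro c hc
  obtain ⟨ψ, C, hψ⟩ := exists_addChar_dist_le N₁ N₂ hsynd (expAddChar c)
    fun ε hε ↦ exists_forall_dist_expAddChar_lt hc hε
  obtain ⟨μ, hμ⟩ := exists_eq_circleExp_mul (continuous_addChar_of_dist_le hN₁ fun x ↦ (hψ x).1)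
  refine ⟨μ, mem_returnModule_of_dist_le fun x ↦ hμ x ▸ (hψ x).1, c - μ,
    mem_returnModule_of_dist_le (C := C) fun x ↦ ?_, add_sub_cancel _ _⟩
  have hdist : dist (Circle.exp ((c - μ) * x)) 1 = dist (ψ x) (expAddChar c x) := by
    rw [sub_mul, Circle.exp_sub, circle_dist_div_one, dist_comm, hμ]
    rfl
  exact hdist.trans_le (hψ x).2

end ReturnModule

section Bridge

variable {α : Type*} [PseudoEMetricSpace α] {d : α → α → ℝ} {w : ℝ → α}

theorem weylD_comp_add_right (hd : ∀ x y, ENNReal.ofReal (d x y) = truncEDist x y) (l τ : ℝ) :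
    weylD d 1 l w (fun t ↦ w (t + τ)) = supMean l (transCost w τ) := by
  simp [weylD, hd, supMean, transCost]

theorem weylDinf_comp_add_right (hd : ∀ x y, ENNReal.ofReal (d x y) = truncEDist x y) (τ : ℝ) :
    weylDinf d 1 w (fun t ↦ w (t + τ)) = upperMean (transCost w τ) := by
  simp only [weylDinf, weylD_comp_add_right hd, upperMean]

theorem coe_circleExp (x : ℝ) : (Circle.exp x : ℂ) = Complex.exp (Complex.I * x) := by
  rw [Circle.coe_exp, mul_comm]

theorem tendsto_coe_circle_one_iff {ι : Type*} {f : Filter ι} {z : ι → Circle} :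
    Tendsto (fun i ↦ (z i : ℂ)) f (𝓝 1) ↔ Tendsto z f (𝓝 1) := by
  rw [tendsto_iff_dist_tendsto_zero, tendsto_iff_dist_tendsto_zero (f := z)]
  rfl

theorem WMod_eq_returnModule (hd : ∀ x y, ENNReal.ofReal (d x y) = truncEDist x y)
    (hw : AEStronglyMeasurable w) : WMod d w = returnModule (weylSeminorm hw) := by
  refine Set.ext fun c ↦ Iff.trans (forall_congr' fun τ ↦ ?_) tendsto_iff_seq_tendsto.symm
  simp only [tendsto_comap_iff, weylDinf_comp_add_right hd, ← coe_circleExp]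
  exact imp_congr (tendsto_weylSeminorm_zero_iff hw).symm tendsto_coe_circle_one_iff

theorem MemWp.isWeylAP (hd : ∀ x y, ENNReal.ofReal (d x y) = truncEDist x y) {x₀ : α}
    (hw : MemWp d 1 x₀ w) : IsWeylAP w := by
  refine ⟨hw.1.1, fun ε hε ↦ ?_⟩
  have hε₁ : min ε 1 ≠ ∞ := ne_top_of_le_ne_top ENNReal.one_ne_top (min_le_right _ _)
  obtain ⟨l, hl, hT⟩ := hw.2 (min ε 1).toReal
    (ENNReal.toReal_pos (lt_min hε one_pos).ne' hε₁)
  refine ⟨l, hl, hT.mono fun τ hτ ↦ ?_⟩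
  have hlt : supMean l (transCost w τ) < min ε 1 := by
    rwa [APeriodsL, Set.mem_ofPred_eq, weylD_comp_add_right hd, ENNReal.ofReal_toReal hε₁] at hτ
  exact hlt.le.trans (min_le_left _ _)

theorem IsWeylAP.memWp (hd : ∀ x y, ENNReal.ofReal (d x y) = truncEDist x y) (x₀ : α)
    (hw : IsWeylAP w) : MemWp d 1 x₀ w := by
  refine ⟨⟨hw.aestronglyMeasurable, 1, fun ξ ↦ ?_⟩, fun ε hε ↦ ?_⟩
  · calc ∫⁻ t in Set.Icc ξ (ξ + 1), ENNReal.ofReal (d (w t) x₀ ^ (1 : ℝ))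
        ≤ ∫⁻ _ in Set.Icc ξ (ξ + 1), 1 :=
          lintegral_mono fun t ↦ by simpa [hd] using truncEDist_le_one (w t) x₀
      _ = ENNReal.ofReal 1 := by simp
  · obtain ⟨l, hl, hT⟩ := hw.relDense (ENNReal.ofReal (ε / 2)) (by simpa using hε)
    refine ⟨l, hl, hT.mono fun τ hτ ↦ ?_⟩
    rw [APeriodsL, Set.mem_ofPred_eq, weylD_comp_add_right hd]
    exact hτ.trans_lt ((ENNReal.ofReal_lt_ofReal_iff hε).2 (half_lt_self hε))

theorem ofReal_bdist {U : Type*} [PseudoMetricSpace U] (x y : U) :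
    ENNReal.ofReal (bdist x y) = truncEDist x y := by
  rw [bdist, ENNReal.ofReal_min, ENNReal.ofReal_one, ← edist_dist, truncEDist]

theorem ofReal_clDist {U : Type*} [MetricSpace U] (A B : Closeds U) :
    ENNReal.ofReal (clDist A B) = truncEDist A B :=
  ENNReal.ofReal_toReal (truncEDist_ne_top A B)

end Bridge

section Assembly

variable {α β : Type*} [PseudoEMetricSpace α] [PseudoEMetricSpace β] {w : ℝ → α} {v : ℝ → β}

theorem returnModule_prodMk_subset (hv : IsWeylAP v) (hw : IsWeylAP w) :
    returnModule (weylSeminorm (hv.prodMk hw).aestronglyMeasurable) ⊆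
      returnModule (weylSeminorm hv.aestronglyMeasurable) +
        returnModule (weylSeminorm hw.aestronglyMeasurable) := by
  set Nv := weylSeminorm hv.aestronglyMeasurable
  set Nw := weylSeminorm hw.aestronglyMeasurable
  have hle : Tendsto (weylSeminorm (hv.prodMk hw).aestronglyMeasurable)
      (comap (Nv + Nw) (𝓝 0)) (𝓝 0) :=
    squeeze_zero (fun _ ↦ apply_nonneg _ _)
      (weylSeminorm_prodMk_le hv.aestronglyMeasurable hw.aestronglyMeasurable) tendsto_comap
  refine (returnModule_mono hle).trans (returnModule_add_subset (fun ε hε ↦ ?_)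
    hv.tendsto_weylSeminorm_zero)
  refine ((hv.prodMk hw).isSyndetic_weylSeminorm_lt (half_pos hε)).mono fun τ hτ ↦ ?_
  have hvτ : Nv τ < ε / 2 := hτ.trans_le' <|
    weylSeminorm_le_of_transCost_le _ _ fun t ↦ truncEDist_fst_le (v t, w t) (v (t + τ), w (t + τ))
  have hwτ : Nw τ < ε / 2 := hτ.trans_le' <|
    weylSeminorm_le_of_transCost_le _ _ fun t ↦ truncEDist_snd_le (v t, w t) (v (t + τ), w (t + τ))
  exact (add_lt_add hvτ hwτ).trans_eq (add_halves ε)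

theorem exists_pos_forall_le_ofReal_toReal {η : ℝ → ℝ} (hη : StrictMonoOn η (Set.Ici 0))
    (hpos : ∀ t > 0, 0 < η t) (c : ℝ≥0∞) (hc : 0 < c) :
    ∃ ε > 0, ∀ x ≥ c, x ≠ ∞ → ε ≤ ENNReal.ofReal (η x.toReal) := by
  have hc₁ : min c 1 ≠ ∞ := ne_top_of_le_ne_top ENNReal.one_ne_top (min_le_right _ _)
  refine ⟨ENNReal.ofReal (η (min c 1).toReal), ENNReal.ofReal_pos.2 (hpos _ ?_), fun x hx hx' ↦ ?_⟩
  · exact ENNReal.toReal_pos (lt_min hc one_pos).ne' hc₁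
  · exact ENNReal.ofReal_le_ofReal <| hη.monotoneOn ENNReal.toReal_nonneg ENNReal.toReal_nonneg <|
      ENNReal.toReal_mono hx' ((min_le_left _ _).trans hx)

theorem dist_le_infDist_add_of_edist_le {U : Type*} [PseudoMetricSpace U] {x y : U} {s : Set U}
    (hs : s.Nonempty) {c : ℝ} (hc : 0 ≤ c)
    (h : edist x y ≤ Metric.infEDist x s + ENNReal.ofReal c) :
    dist x y ≤ Metric.infDist x s + c := by
  have htop := Metric.infEDist_ne_top (x := x) hs
  rw [dist_edist, Metric.infDist, ← ENNReal.toReal_ofReal hc, ← ENNReal.toReal_add htop (by simp)]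
  exact ENNReal.toReal_mono (by simp [htop]) h

end Assembly

end

open TopologicalSpace in
/-- **Theorem 1 (selection theorem for `W(ℝ,U)`).**
Let `(U,ρ)` be a complete metric space, `g ∈ W(ℝ,U)`, `F ∈ W(ℝ, cl U)`.  Then for any
increasing `η : [0,∞) → [0,∞)` with `η 0 = 0` and `η t > 0` for `t > 0` there is
`f ∈ W(ℝ,U)` with `Mod f ⊆ Mod g + Mod F`, `f(t) ∈ F(t)` a.e. and
`ρ(f(t), g(t)) ≤ ρ(g(t), F(t)) + η(ρ(g(t), F(t)))` a.e. -/
theorem weyl_ap_selection {U : Type*} [MetricSpace U] [CompleteSpace U] (x₀ : U)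
    (g : ℝ → U) (hg : MemWp bdist 1 x₀ g)
    (F : ℝ → Closeds U) (hFne : ∀ t : ℝ, (F t : Set U).Nonempty)
    (hF : MemWp clDist 1 (⟨{x₀}, isClosed_singleton⟩ : Closeds U) F)
    (η : ℝ → ℝ) (hηmono : StrictMonoOn η (Set.Ici 0)) (hη0 : η 0 = 0)
    (hηpos : ∀ t > (0 : ℝ), 0 < η t) :
    ∃ f : ℝ → U, MemWp bdist 1 x₀ f ∧
      WMod bdist f ⊆ WMod bdist g + WMod clDist F ∧
      (∀ᵐ t ∂(volume : Measure ℝ), f t ∈ (F t : Set U)) ∧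
      (∀ᵐ t ∂(volume : Measure ℝ),
        dist (f t) (g t) ≤
          Metric.infDist (g t) (F t) + η (Metric.infDist (g t) (F t))) := by
  have hg' := hg.isWeylAP ofReal_bdist
  have hF' := hF.isWeylAP ofReal_clDist
  have hz := hg'.prodMk hF'
  have hself := TransDominated.refl hz.aestronglyMeasurable
  obtain ⟨f, hf, hsel⟩ := exists_selection hz hself.snd hFne hself.fst
    (exists_pos_forall_le_ofReal_toReal hηmono hηpos)
  refine ⟨f, (hf.isWeylAP hz).memWp ofReal_bdist x₀, ?_, hsel.mono fun t ht ↦ ht.1,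
    hsel.mono fun t ht ↦ ?_⟩
  · rw [WMod_eq_returnModule ofReal_bdist hf.aestronglyMeasurable,
      WMod_eq_returnModule ofReal_bdist hg'.aestronglyMeasurable,
      WMod_eq_returnModule ofReal_clDist hF'.aestronglyMeasurable]
    exact (returnModule_mono (hf.tendsto_weylSeminorm hz.aestronglyMeasurable)).trans
      (returnModule_prodMk_subset hg' hF')
  · have hη : 0 ≤ η (Metric.infDist (g t) (F t)) := hη0.ge.trans <|
      hηmono.monotoneOn Set.self_mem_Ici Metric.infDist_nonneg Metric.infDist_nonneg
    exact dist_comm (f t) _ ▸ dist_le_infDist_add_of_edist_le (hFne t) hη ht.2
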